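/- Let M be a d-dimensional manifold without boundary, π : E → M a fiber bundle with path-connected fiber, and W a sufficiently separated collection for π. Let Y_• be the associated semi-simplicial space with Y_p = ⨆ Γ(E, Δ_0, …, Δ_p), the coproduct over all (p+1)-tuples of pairwise disjoint elements of W, with face maps forgetting an element. Then the natural map ||Y_•|| → Γ(E) that forgets the fixed subsets (sending the class of a point of Γ(E, Δ_0, …, Δ_p) × Δ^p to the underlying section) is a weak homotopy equivalence. -/

import Mathlib

/-!
The weak equivalence follows from a lifting criterion: `f : X → Y` is a weak homotopy equivalence
if every square from `∂I^n → I^n` to `f` can be deformed, through such squares, to one with a strict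
diagonal lift (`HasHomotopyLifts.isWeakHomotopyEquiv`). Such a deformation yields a lift which is
strict on `∂I^n` and commutes below up to homotopy rel `∂I^n`, by inserting the deformation in a
collar.

Let `φ : ∂I^n → ||Y_•||` and `Φ : I^n → Γ(E)` form a square.

* The homotopy `squishY` of `||Y_•||` over `Γ(E)` pushes small barycentric coordinates to zero.
  After it, the map `φ` is locally given by one tuple `g` of germs and continuous barycentric
  coordinates (`exists_local_structure`), so by compactness only finitely many tuples are involved.
  This holds without any separation property of the bundle or of the section spaces.
* Separatedness of `W` gives a germ `w ∈ W` whose set lies in the interior of a ball disjoint from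
  all sets occurring in these tuples. The family `Φ` can be deformed inside that ball so that it
  fixes `w` (`exists_deformation`): the bundle is trivial over a ball around the set of `w`
  (`exists_trivialization_disk`), over this contractible set any two families of sections
  parametrized by `I^n` are homotopic since the fiber is path-connected, and the cofibration property
  extends the homotopy. As the deformation does not touch the sets of the tuples, `φ` is carried
  along.
* Now `w` can be adjoined to all tuples, and coning off moves `φ` to the vertex `w`, over which
  `Φ` lifts tautologically.

That the locally defined homotopies agree on overlaps follows from the fact that a point of
`||Y_•||` is determined by its section and the list of its germs with nonzero barycentric coordinate
(`eq_of_normalForm_eq`).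
-/


open scoped unitInterval Topology

universe u v w

section WHE

variable {X : Type u} {Y : Type v} [TopologicalSpace X] [TopologicalSpace Y]

/-- The map induced on path components by a continuous map. -/
noncomputable def pi0Map (f : C(X, Y)) : ZerothHomotopy X → ZerothHomotopy Y :=
  Quotient.map f (fun _ _ h => ⟨h.somePath.map f.continuous⟩)

/-- The map induced on generalized loops by a continuous map. -/
def genLoopMap {N : Type} (f : C(X, Y)) {x : X} (p : GenLoop N X x) :
    GenLoop N Y (f x) :=
  ⟨f.comp p.1, fun y hy => by
    show f (p.1 y) = f x
    rw [p.2 y hy]⟩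

theorem genLoopMap_homotopic {N : Type} (f : C(X, Y)) {x : X} {p q : GenLoop N X x}
    (h : GenLoop.Homotopic p q) : GenLoop.Homotopic (genLoopMap f p) (genLoopMap f q) :=
  h.map (fun H => H.compContinuousMap f)

/-- The map induced on `n`-th homotopy groups by a continuous map. -/
noncomputable def piMap (n : ℕ) (f : C(X, Y)) (x : X) :
    HomotopyGroup (Fin n) X x → HomotopyGroup (Fin n) Y (f x) :=
  Quotient.map (genLoopMap f) (fun _ _ h => genLoopMap_homotopic f h)

/-- A map of topological spaces is a weak homotopy equivalence if it is continuous, induces a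
bijection on path components and, for every basepoint and every `n ≥ 1`, a bijection on `n`-th
homotopy groups. -/
def IsWeakHomotopyEquiv (f : X → Y) : Prop :=
  ∃ hf : Continuous f,
    Function.Bijective (pi0Map ⟨f, hf⟩) ∧
      ∀ n : ℕ, 1 ≤ n → ∀ x : X, Function.Bijective (piMap n ⟨f, hf⟩ x)

end WHE

section Cofib

/-- The inclusion of a closed subset `A ⊆ X` is a closed cofibration if it satisfies the
homotopy extension property with respect to all spaces. -/
def ClosedCofibration {X : Type u} [TopologicalSpace X] (A : Set X) : Prop :=
  IsClosed A ∧ ∀ (Z : Type u) [TopologicalSpace Z] (f : C(X, Z))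
    (h : C(A × unitInterval, Z)), (∀ a : A, h (a, 0) = f a) →
      ∃ H : C(X × unitInterval, Z), (∀ x : X, H (x, 0) = f x) ∧
        ∀ (a : A) (t : unitInterval), H (↑a, t) = h (a, t)

end Cofib

section Bundle

variable {E M : Type u} [TopologicalSpace E] [TopologicalSpace M]

/-- `π : E → M` is a fiber bundle with fiber `F`: a continuous map which is locally on `M`
trivial with fiber `F`. -/
structure IsFiberBundle (F : Type u) [TopologicalSpace F] (π : E → M) : Prop where
  continuous : Continuous π
  locTriv : ∀ x : M, ∃ U : Set M, IsOpen U ∧ x ∈ U ∧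
    ∃ e : (π ⁻¹' U) ≃ₜ (U × F), ∀ y : π ⁻¹' U, ((e y).1 : M) = π ↑y

/-- The space of continuous sections of `π : E → M`, topologized as a subspace of `C(M, E)`
with the compact-open topology. -/
abbrev SectionSpace (π : E → M) : Type u :=
  {s : C(M, E) // ∀ x : M, π (s x) = x}

/-- The closed unit ball in `ℝ^d`. -/
def closedDisk (d : ℕ) : Set (EuclideanSpace ℝ (Fin d)) :=
  Metric.closedBall 0 1

/-- A subset `Δ ⊆ M` together with (a representative of) a germ of a continuous section of
`π` on a neighborhood of `Δ`. -/
structure GermData (π : E → M) : Type u where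
  Δ : Set M
  U : Set M
  isOpen : IsOpen U
  subset : Δ ⊆ U
  sec : C(U, E)
  isSec : ∀ x : U, π (sec x) = ↑x

/-- A section has germ `g` if it agrees with the germ's section on the underlying set. -/
def GermData.Fixes {π : E → M} (g : GermData π) (s : SectionSpace π) : Prop :=
  ∀ x (hx : x ∈ g.Δ), s.1 x = g.sec ⟨x, g.subset hx⟩

/-- The space `Γ(E, Δ_0, …, Δ_k)` of sections agreeing with the given germs `γ_i` on the
sets `Δ_i`. -/
def relSections {π : E → M} {k : ℕ} (g : Fin k → GermData π) : Set (SectionSpace π) :=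
  {s | ∀ i, (g i).Fixes s}

/-- A tuple of pairs `(Δ_i, γ_i)` is disjoint if the underlying sets are pairwise disjoint. -/
def DisjTuple {π : E → M} {k : ℕ} (g : Fin k → GermData π) : Prop :=
  ∀ i j, i ≠ j → Disjoint (g i).Δ (g j).Δ

/-- A sufficiently separated collection for the bundle `π : E → M` over a `d`-dimensional
manifold `M`. -/
structure IsSuffSep (d : ℕ) {E M : Type u} [TopologicalSpace E] [TopologicalSpace M]
    (π : E → M) (W : Set (GermData π)) : Prop where
  compact : ∀ g ∈ W, IsCompact g.Δ
  contractible : ∀ g ∈ W, ContractibleSpace g.Δ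
  cofib : ∀ g ∈ W, ∃ D : Set M, Nonempty (D ≃ₜ closedDisk d) ∧ g.Δ ⊆ interior D ∧
    ClosedCofibration (X := D) (Subtype.val ⁻¹' g.Δ)
  sep : ∀ (k : ℕ) (g : Fin k → GermData π), (∀ i, g i ∈ W) →
    ∃ g' ∈ W, ∃ D : Set M, Nonempty (D ≃ₜ closedDisk d) ∧ g'.Δ ⊆ interior D ∧
      ∀ i, Disjoint D (g i).Δ

end Bundle

section Simplex

/-- The `i`-th face inclusion `Δ^p → Δ^{p+1}` of standard topological simplices. -/
def simplexFace {p : ℕ} (i : Fin (p + 2)) (t : stdSimplex ℝ (Fin (p + 1))) :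
    stdSimplex ℝ (Fin (p + 2)) :=
  ⟨i.insertNth 0 t.1, by
    constructor
    · intro x
      rcases eq_or_ne x i with rfl | hx
      · simp
      · obtain ⟨j, rfl⟩ := Fin.exists_succAbove_eq hx
        rw [Fin.insertNth_apply_succAbove]
        exact t.2.1 j
    · rw [Fin.sum_univ_succAbove _ i]
      simp only [Fin.insertNth_apply_same, Fin.insertNth_apply_succAbove, zero_add]
      exact t.2.2⟩

end Simplex

section YReal

variable {E M : Type u} [TopologicalSpace E] [TopologicalSpace M]
  (π : E → M) (W : Set (GermData π))

/-- The set of `(p+1)`-tuples of pairwise disjoint elements of `W`. -/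
def TupW (p : ℕ) : Type u :=
  {g : Fin (p + 1) → GermData π // (∀ i, g i ∈ W) ∧ DisjTuple g}

variable {π W}

/-- The face of a tuple obtained by forgetting the `i`-th element. -/
def TupW.face {p : ℕ} (i : Fin (p + 2)) (g : TupW π W (p + 1)) : TupW π W p :=
  ⟨fun j => g.1 (i.succAbove j), fun j => g.2.1 _, fun j k hjk =>
    g.2.2 _ _ fun hc => hjk (Fin.succAbove_right_injective hc)⟩

variable (π W)

/-- The `p`-th space of the semi-simplicial space `Y_•` associated to `W`: the coproduct, over
all `(p+1)`-tuples of pairwise disjoint elements of `W`, of the section spaces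
`Γ(E, Δ_0, …, Δ_p)`. -/
abbrev Yspace (p : ℕ) : Type u :=
  Σ g : TupW π W p, ↥(relSections g.1)

/-- The face maps of `Y_•`, forgetting the `i`-th fixed subset. -/
def Yface (p : ℕ) (i : Fin (p + 2)) (y : Yspace π W (p + 1)) : Yspace π W p :=
  ⟨y.1.face i, ⟨y.2.1, fun j => y.2.2 (i.succAbove j)⟩⟩

/-- The underlying space `⨆_p Y_p × Δ^p` of the fat geometric realization of `Y_•`. -/
abbrev YPre : Type u :=
  Σ p : ℕ, Yspace π W p × stdSimplex ℝ (Fin (p + 1))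

/-- The gluing relation of the fat geometric realization of `Y_•`. -/
inductive YRel : YPre π W → YPre π W → Prop
  | glue (p : ℕ) (i : Fin (p + 2)) (y : Yspace π W (p + 1))
      (t : stdSimplex ℝ (Fin (p + 1))) :
      YRel ⟨p, Yface π W p i y, t⟩ ⟨p + 1, y, simplexFace i t⟩

/-- The fat geometric realization `||Y_•||`, with the quotient topology. -/
abbrev YRealization : Type u :=
  Quot (YRel π W)

/-- The natural map `||Y_•|| → Γ(E)` forgetting the fixed subsets. -/
def forgetY : YRealization π W → SectionSpace π :=
  Quot.lift (fun a => (a.2.1.2 : SectionSpace π)) (by rintro _ _ ⟨p, i, y, t⟩; rfl)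

end YReal

/-! ### A lifting criterion for weak homotopy equivalences -/

section Criterion

variable {X : Type u} {Y : Type v} [TopologicalSpace X] [TopologicalSpace Y]

/-- Commutative squares from `∂I^n → I^n` to `f : X → Y`, with the compact-open topology; a path
in this space is a homotopy of such squares. -/
abbrev SquareSpace (n : ℕ) (f : C(X, Y)) : Type _ :=
  {p : C(Cube.boundary (Fin n), X) × C(Fin n → I, Y) //
    ∀ x : Cube.boundary (Fin n), f (p.1 x) = p.2 x.1}

/-- A square has a strict lift if there is a diagonal making both triangles commute. -/
def HasStrictLift {n : ℕ} {f : C(X, Y)} (p : SquareSpace n f) : Prop :=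
  ∃ l : C(Fin n → I, X), (∀ x : Cube.boundary (Fin n), l x.1 = p.1.1 x) ∧
    ∀ x, f (l x) = p.1.2 x

/-- Sup-norm distance from the centre of the cube, scaled to be `1` on the boundary. -/
noncomputable def cubeRadius {n : ℕ} (x : Fin n → I) : ℝ :=
  ‖fun i => 2 * (x i : ℝ) - 1‖

/-- The radial map that doubles the inner half-size cube onto the cube and pushes the outer
collar to the boundary. -/
noncomputable def cubeStretch {n : ℕ} (x : Fin n → I) : Fin n → I := fun i =>
  Set.projIcc (0 : ℝ) 1 zero_le_one (1 / 2 + ((x i : ℝ) - 1 / 2) / max (cubeRadius x) (1 / 2))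

/-- The collar coordinate: `0` on the boundary and `1` on the inner half-size cube. -/
noncomputable def cubeCollar {n : ℕ} (x : Fin n → I) : I :=
  Set.projIcc (0 : ℝ) 1 zero_le_one (2 * (1 - cubeRadius x))

theorem continuous_cubeRadius {n : ℕ} : Continuous (cubeRadius (n := n)) := by
  unfold cubeRadius; fun_prop

theorem continuous_cubeStretch {n : ℕ} : Continuous (cubeStretch (n := n)) := by
  refine continuous_pi fun i => continuous_projIcc.comp ?_
  refine continuous_const.add (Continuous.div (by fun_prop)
    (continuous_cubeRadius.max continuous_const) fun x => ?_)
  have : (1 / 2 : ℝ) ≤ max (cubeRadius x) (1 / 2) := le_max_right _ _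
  linarith

theorem continuous_cubeCollar {n : ℕ} : Continuous (cubeCollar (n := n)) := by
  refine continuous_projIcc.comp ?_
  have := continuous_cubeRadius (n := n)
  fun_prop

theorem cubeRadius_boundary {n : ℕ} {x : Fin n → I} (hx : x ∈ Cube.boundary (Fin n)) :
    cubeRadius x = 1 := by
  apply le_antisymm
  · refine (pi_norm_le_iff_of_nonneg zero_le_one).2 fun i => ?_
    rw [Real.norm_eq_abs, abs_le]
    constructor <;> linarith [(x i).2.1, (x i).2.2]
  · obtain ⟨i, hi⟩ := hx
    have h := norm_le_pi_norm (fun i => 2 * (x i : ℝ) - 1) i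
    refine le_trans ?_ h
    rcases hi with hi | hi <;> simp [hi]
    norm_num

theorem cubeStretch_boundary {n : ℕ} {x : Fin n → I} (hx : x ∈ Cube.boundary (Fin n)) :
    cubeStretch x = x := by
  funext i
  unfold cubeStretch
  rw [cubeRadius_boundary hx, max_eq_left (by norm_num)]
  have : (1 / 2 + ((x i : ℝ) - 1 / 2) / 1) = (x i : ℝ) := by ring
  rw [this]
  exact Set.projIcc_val _ _

theorem cubeCollar_boundary {n : ℕ} {x : Fin n → I} (hx : x ∈ Cube.boundary (Fin n)) :
    cubeCollar x = 0 := by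
  unfold cubeCollar
  rw [cubeRadius_boundary hx]
  simp

theorem cubeCollar_inner {n : ℕ} {x : Fin n → I} (hx : cubeRadius x ≤ 1 / 2) :
    cubeCollar x = 1 :=
  Set.projIcc_of_right_le _ (by linarith)

theorem cubeStretch_mem {n : ℕ} {x : Fin n → I} (hx : 1 / 2 ≤ cubeRadius x) :
    cubeStretch x ∈ Cube.boundary (Fin n) := by
  have hpos : 0 < cubeRadius x := by linarith
  have hne : Nonempty (Fin n) := by
    by_contra h
    rw [not_nonempty_iff] at h
    have : cubeRadius x = 0 := by
      unfold cubeRadius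
      rw [norm_eq_zero]
      exact Subsingleton.elim _ _
    linarith
  obtain ⟨i, hi⟩ : ∃ i, cubeRadius x = |2 * (x i : ℝ) - 1| := by
    obtain ⟨i, -, hi⟩ := Finset.exists_mem_eq_sup' (s := Finset.univ) Finset.univ_nonempty
      (fun i => ‖2 * (x i : ℝ) - 1‖₊)
    refine ⟨i, ?_⟩
    rw [Finset.sup'_eq_sup] at hi
    unfold cubeRadius
    rw [Pi.norm_def, hi]
    simp
  refine ⟨i, ?_⟩
  unfold cubeStretch
  rw [max_eq_left hx]
  rcases abs_cases (2 * (x i : ℝ) - 1) with h | h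
  · right
    have : (1 / 2 + ((x i : ℝ) - 1 / 2) / cubeRadius x) = 1 := by
      have hr : cubeRadius x = 2 * (x i : ℝ) - 1 := hi.trans h.1
      have hx2 : (x i : ℝ) - 1 / 2 = cubeRadius x / 2 := by rw [hr]; ring
      rw [hx2]
      field_simp
      norm_num
    rw [this]
    exact Set.projIcc_right _
  · left
    have : (1 / 2 + ((x i : ℝ) - 1 / 2) / cubeRadius x) = 0 := by
      have hr : cubeRadius x = -(2 * (x i : ℝ) - 1) := hi.trans h.1
      have hx2 : (x i : ℝ) - 1 / 2 = -(cubeRadius x / 2) := by rw [hr]; ring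
      rw [hx2]
      field_simp
      norm_num
    rw [this]
    exact Set.projIcc_left _

theorem isClosed_cubeBoundary (n : ℕ) : IsClosed (Cube.boundary (Fin n)) := by
  have : Cube.boundary (Fin n) = ⋃ i, ({y | y i = 0} ∪ {y | y i = 1}) := by
    ext y; simp [Cube.boundary]
  rw [this]
  refine isClosed_iUnion_of_finite fun i => IsClosed.union ?_ ?_
  · exact isClosed_eq (continuous_apply i) continuous_const
  · exact isClosed_eq (continuous_apply i) continuous_const

instance compactSpace_cubeBoundary (n : ℕ) : CompactSpace (Cube.boundary (Fin n)) :=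
  isCompact_iff_compactSpace.1 (isClosed_cubeBoundary n).isCompact

/-- If a square is homotopic, through squares, to a strictly liftable one, then it has a lift whose
upper triangle commutes strictly and whose lower one commutes up to homotopy rel boundary: the
homotopy is inserted in a collar of the boundary. -/
theorem lift_of_joined {n : ℕ} {f : C(X, Y)} {p q : SquareSpace n f} (h : Joined p q)
    (hq : HasStrictLift q) :
    ∃ l : C(Fin n → I, X), (∀ x : Cube.boundary (Fin n), l x.1 = p.1.1 x) ∧
      ContinuousMap.HomotopicRel (f.comp l) p.1.2 (Cube.boundary (Fin n)) := by
  obtain ⟨γ⟩ := h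
  obtain ⟨m, hm1, hm2⟩ := hq
  have hφ : Continuous fun z : I × Cube.boundary (Fin n) => (γ z.1).1.1 z.2 := by
    have : Continuous fun s : I => (γ s).1.1 := by fun_prop
    fun_prop
  have hΦ : Continuous fun z : I × (Fin n → I) => (γ z.1).1.2 z.2 := by
    have : Continuous fun s : I => (γ s).1.2 := by fun_prop
    fun_prop
  classical
  let l0 : (Fin n → I) → X := fun x =>
    if hx : 1 / 2 ≤ cubeRadius x then (γ (cubeCollar x)).1.1 ⟨cubeStretch x, cubeStretch_mem hx⟩
    else m (cubeStretch x)
  have hl0_inner : ∀ x, cubeRadius x ≤ 1 / 2 → l0 x = m (cubeStretch x) := by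
    intro x hx
    by_cases hx' : 1 / 2 ≤ cubeRadius x
    · simp only [l0, dif_pos hx']
      rw [cubeCollar_inner hx, γ.target]
      exact (hm1 ⟨_, cubeStretch_mem hx'⟩).symm
    · simp only [l0, dif_neg hx']
  have hl0 : Continuous l0 := by
    rw [← continuousOn_univ]
    have hcov : (Set.univ : Set (Fin n → I)) =
        {x | 1 / 2 ≤ cubeRadius x} ∪ {x | cubeRadius x ≤ 1 / 2} := by
      ext x; simp [le_total]
    rw [hcov]
    refine ContinuousOn.union_of_isClosed ?_ ?_
      (isClosed_le continuous_const continuous_cubeRadius)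
      (isClosed_le continuous_cubeRadius continuous_const)
    · rw [continuousOn_iff_continuous_domRestrict]
      have : Set.domRestrict {x | 1 / 2 ≤ cubeRadius x} l0 = fun x =>
          (γ (cubeCollar x.1)).1.1 ⟨cubeStretch x.1, cubeStretch_mem x.2⟩ := by
        funext x
        have hx : 1 / 2 ≤ cubeRadius x.1 := x.2
        simp only [Set.domRestrict_apply, l0, dif_pos hx]
      rw [this]
      exact hφ.comp (f := fun x : {x : Fin n → I | 1 / 2 ≤ cubeRadius x} =>
          ((cubeCollar x.1, ⟨cubeStretch x.1, cubeStretch_mem x.2⟩) :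
            I × Cube.boundary (Fin n)))
        ((continuous_cubeCollar.comp continuous_subtype_val).prodMk
          ((continuous_cubeStretch.comp continuous_subtype_val).subtype_mk _))
    · exact ContinuousOn.congr (m.continuous.comp continuous_cubeStretch).continuousOn
        fun x hx => hl0_inner x hx
  have hfl : ∀ x, f (l0 x) = (γ (cubeCollar x)).1.2 (cubeStretch x) := by
    intro x
    by_cases hx : 1 / 2 ≤ cubeRadius x
    · simp only [l0, dif_pos hx]
      exact (γ (cubeCollar x)).2 _
    · rw [hl0_inner x (not_le.1 hx).le, cubeCollar_inner (not_le.1 hx).le, γ.target]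
      exact hm2 _
  refine ⟨⟨l0, hl0⟩, ?_, ?_⟩
  · rintro ⟨x, hx⟩
    have h1 : (1 / 2 : ℝ) ≤ cubeRadius x := by rw [cubeRadius_boundary hx]; norm_num
    have h2 : (⟨cubeStretch x, cubeStretch_mem h1⟩ : Cube.boundary (Fin n)) = ⟨x, hx⟩ :=
      Subtype.ext (cubeStretch_boundary hx)
    simp only [ContinuousMap.coe_mk, l0, dif_pos h1]
    rw [h2, cubeCollar_boundary hx, γ.source]
  · let lin : I × (Fin n → I) → (Fin n → I) := fun z i =>
      Set.projIcc (0 : ℝ) 1 zero_le_one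
        ((z.1 : ℝ) * (z.2 i : ℝ) + (1 - (z.1 : ℝ)) * (cubeStretch z.2 i : ℝ))
    have hlin : Continuous lin := by
      refine continuous_pi fun i => continuous_projIcc.comp ?_
      have h1 : Continuous fun z : I × (Fin n → I) => cubeStretch z.2 i :=
        (continuous_apply i).comp (continuous_cubeStretch.comp continuous_snd)
      refine Continuous.add (by fun_prop) (Continuous.mul (by fun_prop) ?_)
      exact continuous_subtype_val.comp h1
    have hlin0 : ∀ x, lin (0, x) = cubeStretch x := by
      intro x; funext i; simp [lin]
    have hlin1 : ∀ x, lin (1, x) = x := by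
      intro x; funext i; simp [lin]
    have hlinb : ∀ t x, x ∈ Cube.boundary (Fin n) → lin (t, x) = x := by
      intro t x hx; funext i
      have : ((t : ℝ) * (x i : ℝ) + (1 - (t : ℝ)) * (x i : ℝ)) = (x i : ℝ) := by ring
      simp only [lin, cubeStretch_boundary hx, this]
      exact Set.projIcc_val _ _
    refine ⟨⟨⟨⟨fun z => (γ (σ z.1 * cubeCollar z.2)).1.2 (lin z), ?_⟩, ?_, ?_⟩, ?_⟩⟩
    · refine hΦ.comp (f := fun z : I × (Fin n → I) => (σ z.1 * cubeCollar z.2, lin z)) ?_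
      refine Continuous.prodMk (Continuous.mul ?_ ?_) hlin
      · exact unitInterval.continuous_symm.comp continuous_fst
      · exact continuous_cubeCollar.comp continuous_snd
    · intro x
      simp only [unitInterval.symm_zero, one_mul, hlin0]
      exact (hfl x).symm
    · intro x
      simp only [unitInterval.symm_one, zero_mul, hlin1, γ.source]
    · intro t x hx
      have := hfl x
      simp only [cubeCollar_boundary hx, cubeStretch_boundary hx] at this
      simp only [ContinuousMap.coe_mk, cubeCollar_boundary hx, mul_zero, hlinb t x hx,
        ContinuousMap.comp_apply, this]

/-- The relative-lifting property up to homotopy of squares. -/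
def HasHomotopyLifts (f : C(X, Y)) : Prop :=
  ∀ (n : ℕ) (p : SquareSpace n f), ∃ q : SquareSpace n f, Joined p q ∧ HasStrictLift q

theorem HasHomotopyLifts.surj {f : C(X, Y)} (hf : HasHomotopyLifts f) (n : ℕ) (x₀ : X)
    (Φ : C(Fin n → I, Y)) (hΦ : ∀ x ∈ Cube.boundary (Fin n), Φ x = f x₀) :
    ∃ l : C(Fin n → I, X), (∀ x ∈ Cube.boundary (Fin n), l x = x₀) ∧
      ContinuousMap.HomotopicRel (f.comp l) Φ (Cube.boundary (Fin n)) := by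
  obtain ⟨q, hq, hq'⟩ := hf n ⟨(ContinuousMap.const _ x₀, Φ), fun x => (hΦ x.1 x.2).symm⟩
  obtain ⟨l, hl, hl'⟩ := lift_of_joined hq hq'
  exact ⟨l, fun x hx => hl ⟨x, hx⟩, hl'⟩

/-- Injectivity on homotopy classes: a homotopy downstairs is a map on `I^{n+1}` whose restriction
to the boundary lifts. -/
theorem HasHomotopyLifts.inj {f : C(X, Y)} (hf : HasHomotopyLifts f) (n : ℕ)
    (a b : C(Fin n → I, X)) (hab : ∀ x ∈ Cube.boundary (Fin n), a x = b x)
    (h : ContinuousMap.HomotopicRel (f.comp a) (f.comp b) (Cube.boundary (Fin n))) :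
    ContinuousMap.HomotopicRel a b (Cube.boundary (Fin n)) := by
  obtain ⟨H⟩ := h
  have htail : Continuous fun z : Fin (n + 1) → I => (fun i => z (Fin.succ i) : Fin n → I) := by
    fun_prop
  have hbd : ∀ z ∈ Cube.boundary (Fin (n + 1)), z 0 = 0 ∨ z 0 = 1 ∨
      (fun i => z (Fin.succ i) : Fin n → I) ∈ Cube.boundary (Fin n) := by
    rintro z ⟨i, hi⟩
    refine Fin.cases (fun hi => ?_) (fun j hj => ?_) i hi
    · rcases hi with hi | hi
      · exact Or.inl hi
      · exact Or.inr (Or.inl hi)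
    · exact Or.inr (Or.inr ⟨j, hj⟩)
  let φ0 : Cube.boundary (Fin (n + 1)) → X := fun z =>
    if (z.1 0 : ℝ) ≤ 1 / 2 then a (fun i => z.1 (Fin.succ i)) else b (fun i => z.1 (Fin.succ i))
  have hφ0 : Continuous φ0 := by
    refine Continuous.if_le (a.continuous.comp (htail.comp continuous_subtype_val))
      (b.continuous.comp (htail.comp continuous_subtype_val))
      (continuous_subtype_val.comp ((continuous_apply 0).comp continuous_subtype_val))
      continuous_const ?_
    intro z hz
    rcases hbd z.1 z.2 with h | h | h
    · rw [h] at hz; norm_num at hz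
    · rw [h] at hz; norm_num at hz
    · exact hab _ h
  let Φ0 : C(Fin (n + 1) → I, Y) := ⟨fun z => H (z 0, fun i => z (Fin.succ i)),
    H.continuous.comp ((continuous_apply 0).prodMk htail)⟩
  have hsq : ∀ z : Cube.boundary (Fin (n + 1)), f (φ0 z) = Φ0 z.1 := by
    intro z
    have hH : Φ0 z.1 = H (z.1 0, fun i => z.1 (Fin.succ i)) := rfl
    rw [hH]
    rcases hbd z.1 z.2 with h | h | h
    · rw [h, H.apply_zero]
      simp [φ0, h]
    · rw [h, H.apply_one]
      have : ¬ ((1 : ℝ) ≤ 1 / 2) := by norm_num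
      simp only [φ0, h, Set.Icc.coe_one, if_neg this, ContinuousMap.comp_apply]
    · have h1 : H (z.1 0, fun i => z.1 (Fin.succ i)) = f (a fun i => z.1 (Fin.succ i)) :=
        H.eq_fst _ h
      rw [h1]
      simp only [φ0, hab _ h, ite_self]
  obtain ⟨q, hq, hq'⟩ := hf (n + 1) ⟨(⟨φ0, hφ0⟩, Φ0), hsq⟩
  obtain ⟨l, hl, -⟩ := lift_of_joined hq hq'
  have hcons : Continuous fun z : I × (Fin n → I) => (Fin.cons z.1 z.2 : Fin (n + 1) → I) := by
    refine continuous_pi fun i => ?_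
    refine Fin.cases ?_ (fun j => ?_) i
    · simpa using continuous_fst
    · simp only [Fin.cons_succ]
      exact (continuous_apply j).comp continuous_snd
  have key : ∀ z (hz : z ∈ Cube.boundary (Fin (n + 1))), l z = φ0 ⟨z, hz⟩ :=
    fun z hz => hl ⟨z, hz⟩
  refine ⟨⟨⟨⟨fun z => l (Fin.cons z.1 z.2), l.continuous.comp hcons⟩, ?_, ?_⟩, ?_⟩⟩
  · intro x
    have : (Fin.cons 0 x : Fin (n + 1) → I) ∈ Cube.boundary (Fin (n + 1)) :=
      ⟨0, Or.inl (by simp)⟩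
    simp only [key _ this, φ0, Fin.cons_zero, Fin.cons_succ]
    simp
  · intro x
    have : (Fin.cons 1 x : Fin (n + 1) → I) ∈ Cube.boundary (Fin (n + 1)) :=
      ⟨0, Or.inr (by simp)⟩
    have h1 : ¬ ((1 : ℝ) ≤ 1 / 2) := by norm_num
    simp only [key _ this, φ0, Fin.cons_zero, Fin.cons_succ, Set.Icc.coe_one, if_neg h1]
  · intro t x hx
    have : (Fin.cons t x : Fin (n + 1) → I) ∈ Cube.boundary (Fin (n + 1)) := by
      obtain ⟨i, hi⟩ := hx
      exact ⟨i.succ, by simpa using hi⟩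
    simp only [ContinuousMap.coe_mk, key _ this, φ0, Fin.cons_succ, ← hab x hx, ite_self]

theorem boundary_zero_empty (x : Fin 0 → I) : x ∉ Cube.boundary (Fin 0) := by
  rintro ⟨i, -⟩
  exact i.elim0

theorem HasHomotopyLifts.isWeakHomotopyEquiv {f : C(X, Y)} (hf : HasHomotopyLifts f) :
    IsWeakHomotopyEquiv f := by
  refine ⟨f.continuous, ⟨?_, ?_⟩, fun n _ x => ⟨?_, ?_⟩⟩
  · intro a b
    refine Quotient.inductionOn₂ a b fun a b hab => ?_
    have hj : Joined (f a) (f b) := Quotient.exact hab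
    have hH : ContinuousMap.HomotopicRel (f.comp (ContinuousMap.const (Fin 0 → I) a))
        (f.comp (ContinuousMap.const (Fin 0 → I) b)) (Cube.boundary (Fin 0)) := by
      obtain ⟨γ⟩ := hj
      exact ⟨⟨⟨⟨fun z => γ z.1, by fun_prop⟩, fun x => by simp, fun x => by simp⟩,
        fun t x hx => absurd hx (boundary_zero_empty x)⟩⟩
    obtain ⟨H⟩ := hf.inj 0 _ _ (fun x hx => absurd hx (boundary_zero_empty x)) hH
    refine Quotient.sound ⟨⟨⟨fun t => H (t, Fin.elim0), by fun_prop⟩, ?_, ?_⟩⟩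
    · simp
    · simp
  · intro b
    refine Quotient.inductionOn b fun y => ?_
    have hemp : IsEmpty (Cube.boundary (Fin 0)) := ⟨fun x => boundary_zero_empty x.1 x.2⟩
    obtain ⟨q, hq, hq'⟩ := hf 0 ⟨(⟨fun x => hemp.elim x, continuous_of_const fun x => hemp.elim x⟩,
      ContinuousMap.const _ y), fun x => hemp.elim x⟩
    obtain ⟨l, -, ⟨H⟩⟩ := lift_of_joined hq hq'
    refine ⟨Quotient.mk _ (l Fin.elim0), Quotient.sound ?_⟩
    refine ⟨⟨⟨fun t => H (t, Fin.elim0), by fun_prop⟩, ?_, ?_⟩⟩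
    · simp
    · simp
  · intro a b
    refine Quotient.inductionOn₂ a b fun a b hab => ?_
    have hj : GenLoop.Homotopic (genLoopMap f a) (genLoopMap f b) := Quotient.exact hab
    exact Quotient.sound (hf.inj n a.1 b.1
      (fun x hx => (a.2 x hx).trans (b.2 x hx).symm) hj)
  · intro b
    refine Quotient.inductionOn b fun b => ?_
    obtain ⟨l, hl, hl'⟩ := hf.surj n x b.1 b.2
    exact ⟨Quotient.mk _ ⟨l, hl⟩, Quotient.sound hl'⟩

end Criterion

/-! ### Triviality of a fiber bundle over a closed disk -/

section Triviality

variable {E M F : Type u} [TopologicalSpace E] [TopologicalSpace M] [TopologicalSpace F]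
  {d : ℕ}

/-- The pullback of `π : E → M` along `ψ : ℝ^d → M` is trivial over `A ⊆ ℝ^d`: `τ` is a
trivialization and `κ` the second component of its inverse. Both are total functions of which only
the values over `A` matter. -/
def TrivOver (F : Type u) [TopologicalSpace F] (π : E → M) (ψ : (Fin d → ℝ) → M)
    (A : Set (Fin d → ℝ)) : Prop :=
  ∃ (τ : (Fin d → ℝ) × F → E) (κ : (Fin d → ℝ) × E → F),
    ContinuousOn τ (A ×ˢ Set.univ) ∧
    ContinuousOn κ {z | z.1 ∈ A ∧ π z.2 = ψ z.1} ∧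
    (∀ x ∈ A, ∀ f, π (τ (x, f)) = ψ x) ∧
    (∀ x ∈ A, ∀ f, κ (x, τ (x, f)) = f) ∧
    ∀ x ∈ A, ∀ e, π e = ψ x → τ (x, κ (x, e)) = e

theorem trivOver_of_subset [Nonempty F] {π : E → M} {ψ : (Fin d → ℝ) → M}
    (hψ : Continuous ψ) {A : Set (Fin d → ℝ)} {U : Set M}
    (e : (π ⁻¹' U) ≃ₜ (U × F)) (he : ∀ y : π ⁻¹' U, ((e y).1 : M) = π ↑y)
    (hA : ∀ x ∈ A, ψ x ∈ U) (hU : U.Nonempty) : TrivOver F π ψ A := by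
  classical
  obtain ⟨m₀, hm₀⟩ := hU
  have hsymm : ∀ y : U × F, π (e.symm y).1 = y.1.1 := by
    intro y
    rw [← he, e.apply_symm_apply]
  let f₀ : F := Classical.arbitrary F
  refine ⟨fun z => if h : ψ z.1 ∈ U then (e.symm (⟨ψ z.1, h⟩, z.2)).1
      else (e.symm (⟨m₀, hm₀⟩, f₀)).1,
    fun z => if h : π z.2 ∈ U then (e ⟨z.2, h⟩).2 else f₀, ?_, ?_, ?_, ?_, ?_⟩
  · rw [continuousOn_iff_continuous_domRestrict]
    have : Continuous fun z : (A ×ˢ (Set.univ : Set F)) =>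
        (e.symm (⟨ψ z.1.1, hA _ z.2.1⟩, z.1.2)).1 := by
      refine continuous_subtype_val.comp (e.symm.continuous.comp ?_)
      refine Continuous.prodMk (Continuous.subtype_mk (by fun_prop) _) (by fun_prop)
    refine this.congr fun z => ?_
    simp only [Set.domRestrict_apply]
    rw [dif_pos (hA _ z.2.1)]
  · rw [continuousOn_iff_continuous_domRestrict]
    have hm : ∀ z : {z : (Fin d → ℝ) × E | z.1 ∈ A ∧ π z.2 = ψ z.1}, π z.1.2 ∈ U := by
      intro z
      rw [z.2.2]
      exact hA _ z.2.1
    have : Continuous fun z : {z : (Fin d → ℝ) × E | z.1 ∈ A ∧ π z.2 = ψ z.1} =>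
        (e ⟨z.1.2, hm z⟩).2 := by
      refine continuous_snd.comp (e.continuous.comp ?_)
      exact Continuous.subtype_mk (by fun_prop) _
    refine this.congr fun z => ?_
    simp only [Set.domRestrict_apply]
    rw [dif_pos (hm z)]
  · intro x hx f
    simp only [dif_pos (hA x hx), hsymm]
  · intro x hx f
    simp only [dif_pos (hA x hx)]
    have h1 : π (e.symm (⟨ψ x, hA x hx⟩, f)).1 ∈ U := by rw [hsymm]; exact hA x hx
    rw [dif_pos h1]
    have h2 : (⟨(e.symm (⟨ψ x, hA x hx⟩, f)).1, h1⟩ : π ⁻¹' U)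
        = e.symm (⟨ψ x, hA x hx⟩, f) := rfl
    rw [h2, e.apply_symm_apply]
  · intro x hx y hy
    have h1 : π y ∈ U := by rw [hy]; exact hA x hx
    simp only [dif_pos (hA x hx), dif_pos h1]
    have h2 : ((⟨ψ x, hA x hx⟩, (e ⟨y, h1⟩).2) : U × F) = e ⟨y, h1⟩ := by
      refine Prod.ext (Subtype.ext ?_) rfl
      rw [he]
      exact hy.symm
    rw [h2, e.symm_apply_apply]

/-- Trivializations over closed sets `A` and `B` glue when `B` retracts onto `A ∩ B`: the retraction
extends the transition function from `A ∩ B` to `B`. -/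
theorem TrivOver.union [T2Space M] {π : E → M} (hπ : Continuous π) {ψ : (Fin d → ℝ) → M}
    (hψ : Continuous ψ) {A B : Set (Fin d → ℝ)} (hA : IsClosed A) (hB : IsClosed B)
    (r : (Fin d → ℝ) → (Fin d → ℝ)) (hr : Continuous r) (hrA : ∀ x ∈ B, r x ∈ A)
    (hrB : ∀ x ∈ B, r x ∈ B) (hrid : ∀ x ∈ A, x ∈ B → r x = x)
    (h1 : TrivOver F π ψ A) (h2 : TrivOver F π ψ B) : TrivOver F π ψ (A ∪ B) := by
  classical
  obtain ⟨τA, κA, hτA, hκA, a1, a2, a3⟩ := h1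
  obtain ⟨τB, κB, hτB, hκB, b1, b2, b3⟩ := h2
  let τ' : (Fin d → ℝ) × F → E := fun z => τB (z.1, κB (r z.1, τA (r z.1, z.2)))
  let κ' : (Fin d → ℝ) × E → F := fun z => κA (r z.1, τB (r z.1, κB (z.1, z.2)))
  have hτ' : ContinuousOn τ' (B ×ˢ Set.univ) := by
    refine hτB.comp (t := B ×ˢ Set.univ) (ContinuousOn.prodMk (by fun_prop) ?_)
      fun z hz => ⟨hz.1, trivial⟩
    refine hκB.comp (ContinuousOn.prodMk (by fun_prop) ?_)
      fun z hz => ⟨hrB _ hz.1, a1 _ (hrA _ hz.1) _⟩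
    exact hτA.comp (by fun_prop) fun z hz => ⟨hrA _ hz.1, trivial⟩
  have hκ' : ContinuousOn κ' {z | z.1 ∈ B ∧ π z.2 = ψ z.1} := by
    refine hκA.comp (ContinuousOn.prodMk (by fun_prop) ?_)
      fun z hz => ⟨hrA _ hz.1, b1 _ (hrB _ hz.1) _⟩
    refine hτB.comp (t := B ×ˢ Set.univ) (ContinuousOn.prodMk (by fun_prop) ?_)
      fun z hz => ⟨hrB _ hz.1, trivial⟩
    exact hκB
  have eqτ : ∀ x ∈ A, x ∈ B → ∀ f, τ' (x, f) = τA (x, f) := by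
    intro x hxA hxB f
    simp only [τ', hrid x hxA hxB]
    exact b3 x hxB _ (a1 x hxA f)
  have eqκ : ∀ x ∈ A, x ∈ B → ∀ e, π e = ψ x → κ' (x, e) = κA (x, e) := by
    intro x hxA hxB e he
    simp only [κ', hrid x hxA hxB, b3 x hxB e he]
  let τ : (Fin d → ℝ) × F → E := fun z => if z.1 ∈ A then τA z else τ' z
  let κ : (Fin d → ℝ) × E → F := fun z => if z.1 ∈ A then κA z else κ' z
  have τA_eq : ∀ x ∈ A, ∀ f, τ (x, f) = τA (x, f) := fun x hx f => if_pos hx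
  have κA_eq : ∀ x ∈ A, ∀ e, κ (x, e) = κA (x, e) := fun x hx e => if_pos hx
  have τB_eq : ∀ x ∈ B, ∀ f, τ (x, f) = τ' (x, f) := by
    intro x hx f
    by_cases hxA : x ∈ A
    · rw [τA_eq x hxA, eqτ x hxA hx]
    · exact if_neg hxA
  have κB_eq : ∀ x ∈ B, ∀ e, π e = ψ x → κ (x, e) = κ' (x, e) := by
    intro x hx e he
    by_cases hxA : x ∈ A
    · rw [κA_eq x hxA, eqκ x hxA hx e he]
    · exact if_neg hxA
  refine ⟨τ, κ, ?_, ?_, ?_, ?_, ?_⟩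
  · rw [Set.union_prod]
    refine ContinuousOn.union_of_isClosed (hτA.congr fun z hz => τA_eq z.1 hz.1 z.2)
      (hτ'.congr fun z hz => τB_eq z.1 hz.1 z.2) (hA.prod isClosed_univ) (hB.prod isClosed_univ)
  · have hU : {z : (Fin d → ℝ) × E | z.1 ∈ A ∪ B ∧ π z.2 = ψ z.1} =
        {z | z.1 ∈ A ∧ π z.2 = ψ z.1} ∪ {z | z.1 ∈ B ∧ π z.2 = ψ z.1} := by
      ext z
      simp only [Set.mem_union, Set.mem_ofPred_eq]
      tauto
    have hcl : IsClosed {z : (Fin d → ℝ) × E | π z.2 = ψ z.1} :=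
      isClosed_eq (by fun_prop) (by fun_prop)
    rw [hU]
    exact ContinuousOn.union_of_isClosed (hκA.congr fun z hz => κA_eq z.1 hz.1 z.2)
      (hκ'.congr fun z hz => κB_eq z.1 hz.1 z.2 hz.2)
      ((hA.preimage continuous_fst).inter hcl) ((hB.preimage continuous_fst).inter hcl)
  · rintro x (hx | hx) f
    · rw [τA_eq x hx, a1 x hx]
    · rw [τB_eq x hx]
      exact b1 x hx _
  · rintro x (hx | hx) f
    · rw [τA_eq x hx, κA_eq x hx, a2 x hx]
    · rw [τB_eq x hx, κB_eq x hx _ (b1 x hx _)]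
      simp only [κ']
      rw [b2 x hx, b3 _ (hrB x hx) _ (a1 _ (hrA x hx) _), a2 _ (hrA x hx)]
  · rintro x (hx | hx) e he
    · rw [κA_eq x hx, τA_eq x hx, a3 x hx e he]
    · rw [κB_eq x hx e he, τB_eq x hx]
      simp only [τ', κ']
      rw [a3 _ (hrA x hx) _ (b1 _ (hrB x hx) _), b2 _ (hrB x hx), b3 x hx e he]

/-- A fiber bundle pulled back to a box is trivial: small boxes are trivial by compactness, and two
halves of a bisected box glue along the common face. -/
theorem trivOver_box [T2Space M] [Nonempty F] {π : E → M} (hπ : IsFiberBundle F π)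
    {ψ : (Fin d → ℝ) → M} (hψ : Continuous ψ) (a₀ b₀ : Fin d → ℝ) :
    TrivOver F π ψ (Set.Icc a₀ b₀) := by
  choose U hUo hxU e he using hπ.locTriv
  obtain ⟨δ, hδ, hball⟩ := lebesgue_number_lemma_of_metric (s := Set.Icc a₀ b₀)
    (c := fun m : M => ψ ⁻¹' U m) isCompact_Icc (fun m => (hUo m).preimage hψ)
    (fun x _ => Set.mem_iUnion.2 ⟨ψ x, hxU _⟩)
  have key : ∀ (N : ℕ) (n : Fin d → ℕ), ∑ i, n i = N → ∀ a b : Fin d → ℝ,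
      Set.Icc a b ⊆ Set.Icc a₀ b₀ → (∀ i, b i - a i ≤ 2 ^ n i * (δ / 2)) →
      TrivOver F π ψ (Set.Icc a b) := by
    intro N
    induction N with
    | zero =>
      intro n hn a b hab hside
      have hn0 : ∀ i, n i = 0 := by
        intro i
        exact (Finset.sum_eq_zero_iff.1 hn) i (Finset.mem_univ i)
      by_cases hle : a ≤ b
      · obtain ⟨m, hm⟩ := hball a (hab ⟨le_refl a, hle⟩)
        refine trivOver_of_subset hψ (e m) (he m) (fun x hx => ?_) ⟨m, hxU m⟩
        apply hm
        rw [Metric.mem_ball, dist_pi_lt_iff hδ]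
        intro i
        have h1 := hside i
        rw [hn0 i] at h1
        rw [Real.dist_eq, abs_lt]
        constructor <;> linarith [hx.1 i, hx.2 i]
      · refine trivOver_of_subset hψ (e (ψ a)) (he (ψ a)) (fun x hx => ?_) ⟨_, hxU (ψ a)⟩
        exact absurd (hx.1.trans hx.2) hle
    | succ N ih =>
      intro n hn a b hab hside
      obtain ⟨i, hi⟩ : ∃ i, n i ≠ 0 := by
        by_contra hcon
        push Not at hcon
        simp [hcon] at hn
      set c : ℝ := (a i + b i) / 2 with hc
      have hsplit : Set.Icc a b = Set.Icc a (Function.update b i c) ∪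
          Set.Icc (Function.update a i c) b := by
        ext x
        simp only [Set.mem_union, Set.mem_Icc, le_update_iff, update_le_iff]
        constructor
        · rintro ⟨h1, h2⟩
          rcases le_total (x i) c with h | h
          · exact Or.inl ⟨h1, h, fun j _ => h2 j⟩
          · exact Or.inr ⟨⟨h, fun j _ => h1 j⟩, h2⟩
        · rintro (⟨h1, h2, h3⟩ | ⟨⟨h1, h2⟩, h3⟩)
          · refine ⟨h1, fun j => ?_⟩
            by_cases hj : j = i
            · subst hj; have := h1 j; linarith
            · exact h3 j hj
          · refine ⟨fun j => ?_, h3⟩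
            by_cases hj : j = i
            · subst hj; have := h3 j; linarith
            · exact h2 j hj
      have hn' : ∑ j, Function.update n i (n i - 1) j = N := by
        have h1 := Finset.sum_update_of_mem (Finset.mem_univ i) n (n i - 1)
        have h2 := Finset.add_sum_erase Finset.univ n (Finset.mem_univ i)
        rw [Finset.sdiff_singleton_eq_erase] at h1
        omega
      have hpow : (2 : ℝ) ^ n i = 2 * 2 ^ (n i - 1) := by
        obtain ⟨k, hk⟩ := Nat.exists_eq_succ_of_ne_zero hi
        rw [hk, Nat.succ_sub_one, pow_succ, mul_comm]
      have hsi := hside i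
      rw [hpow] at hsi
      rw [hsplit]
      refine TrivOver.union hπ.continuous hψ isClosed_Icc isClosed_Icc
        (fun x => Function.update x i c) (by fun_prop) ?_ ?_ ?_ ?_ ?_
      · intro x hx
        simp only [Set.mem_Icc, le_update_iff, update_le_iff] at hx ⊢
        refine ⟨⟨?_, fun j hj => hx.1.2 j hj⟩, by simp, fun j hj => ?_⟩
        · have := hx.2 i
          have := hx.1.1
          linarith
        · rw [Function.update_of_ne hj]; exact hx.2 j
      · intro x hx
        simp only [Set.mem_Icc, le_update_iff, update_le_iff] at hx ⊢
        refine ⟨⟨by simp, fun j hj => ?_⟩, ?_, fun j hj => hx.2 j⟩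
        · rw [Function.update_of_ne hj]; exact hx.1.2 j hj
        · have := hx.2 i
          have := hx.1.1
          linarith
      · intro x hxA hxB
        simp only [Set.mem_Icc, le_update_iff, update_le_iff] at hxA hxB
        rw [Function.update_eq_self_iff]
        exact le_antisymm hxB.1.1 hxA.2.1
      · refine ih _ hn' _ _ (fun x hx => hab (hsplit ▸ Or.inl hx)) fun j => ?_
        by_cases hj : j = i
        · subst hj
          simp only [Function.update_self]
          linarith
        · simp only [Function.update_of_ne hj]
          exact hside j
      · refine ih _ hn' _ _ (fun x hx => hab (hsplit ▸ Or.inr hx)) fun j => ?_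
        by_cases hj : j = i
        · subst hj
          simp only [Function.update_self]
          linarith
        · simp only [Function.update_of_ne hj]
          exact hside j
  have hex : ∀ i, ∃ n : ℕ, b₀ i - a₀ i ≤ 2 ^ n * (δ / 2) := by
    intro i
    obtain ⟨n, hn⟩ := pow_unbounded_of_one_lt ((b₀ i - a₀ i) / (δ / 2)) (one_lt_two (α := ℝ))
    refine ⟨n, ?_⟩
    rw [div_lt_iff₀ (by positivity)] at hn
    exact hn.le
  choose n hn using hex
  exact key _ n rfl a₀ b₀ subset_rfl hn

/-- Triviality over an embedded disk `D`, in the form needed for deforming sections. -/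
theorem exists_trivialization_disk [T2Space M] [Nonempty F] {π : E → M} (hπ : IsFiberBundle F π)
    {D : Set M} (hD : D ≃ₜ closedDisk d) :
    ∃ (τ : D × F → E) (κ : {z : D × E // π z.2 = z.1} → F), Continuous τ ∧ Continuous κ ∧
      (∀ (x : D) f, π (τ (x, f)) = x) ∧ ∀ (x : D) e (h : π e = x), τ (x, κ ⟨(x, e), h⟩) = e := by
  let nrm : (Fin d → ℝ) → EuclideanSpace ℝ (Fin d) := fun x =>
    (max 1 ‖WithLp.toLp 2 x‖)⁻¹ • WithLp.toLp 2 x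
  have hto : Continuous fun x : Fin d → ℝ => (WithLp.toLp 2 x : EuclideanSpace ℝ (Fin d)) :=
    PiLp.continuous_toLp 2 _
  have hpos : ∀ y : EuclideanSpace ℝ (Fin d), 0 < max 1 ‖y‖ := fun y =>
    lt_of_lt_of_le one_pos (le_max_left _ _)
  have hnrm : Continuous nrm := by
    refine Continuous.smul (Continuous.inv₀ ?_ fun x => (hpos _).ne') hto
    exact continuous_const.max hto.norm
  have hmem : ∀ x, nrm x ∈ closedDisk d := by
    intro x
    simp only [closedDisk, nrm, mem_closedBall_zero_iff, norm_smul, norm_inv, Real.norm_eq_abs,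
      abs_of_pos (hpos _)]
    rw [inv_mul_le_iff₀ (hpos _), mul_one]
    exact le_max_right _ _
  let ψ : (Fin d → ℝ) → M := fun x => (hD.symm ⟨nrm x, hmem x⟩).1
  have hψ : Continuous ψ :=
    continuous_subtype_val.comp (hD.symm.continuous.comp (hnrm.subtype_mk _))
  let c : D → (Fin d → ℝ) := fun m => WithLp.ofLp (hD m).1
  have hc : Continuous c :=
    (PiLp.continuous_ofLp 2 _).comp (continuous_subtype_val.comp hD.continuous)
  have hψc : ∀ m, ψ (c m) = m := by
    intro m
    have h1 : ‖(hD m).1‖ ≤ 1 := mem_closedBall_zero_iff.1 (hD m).2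
    have h2 : nrm (c m) = (hD m).1 := by
      simp only [nrm, c, WithLp.toLp_ofLp]
      rw [max_eq_left h1, inv_one, one_smul]
    have h3 : (⟨nrm (c m), hmem _⟩ : closedDisk d) = hD m := Subtype.ext h2
    simp only [ψ]
    rw [h3, hD.symm_apply_apply]
  have hcI : ∀ m, c m ∈ Set.Icc (fun _ => -1 : Fin d → ℝ) (fun _ => 1) := by
    intro m
    have h1 : ‖(hD m).1‖ ≤ 1 := mem_closedBall_zero_iff.1 (hD m).2
    have h2 : ∀ i, |c m i| ≤ 1 := fun i =>
      (PiLp.norm_apply_le (hD m).1 i).trans h1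
    exact ⟨fun i => (abs_le.1 (h2 i)).1, fun i => (abs_le.1 (h2 i)).2⟩
  obtain ⟨τ, κ, hτ, hκ, h1, -, h3⟩ := trivOver_box (F := F) hπ hψ (fun _ => -1) (fun _ => 1)
  refine ⟨fun z => τ (c z.1, z.2), fun z => κ (c z.1.1, z.1.2), ?_, ?_, ?_, ?_⟩
  · exact hτ.comp_continuous (by fun_prop) fun z => ⟨hcI _, trivial⟩
  · exact hκ.comp_continuous (by fun_prop) fun z => ⟨hcI _, z.2.trans (hψc _).symm⟩
  · intro x f
    rw [h1 _ (hcI x), hψc]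
  · intro x e h
    exact h3 _ (hcI x) e (h.trans (hψc x).symm)

end Triviality

/-! ### Deforming families of sections near a compact contractible set -/

section Deformation

theorem homotopic_of_contractible {X : Type v} {F : Type u} [TopologicalSpace X]
    [TopologicalSpace F] [ContractibleSpace X] [PathConnectedSpace F] (f g : C(X, F)) :
    f.Homotopic g := by
  obtain ⟨x, hx⟩ := id_nullhomotopic X
  have h1 : ∀ f : C(X, F), f.Homotopic (ContinuousMap.const X (f x)) := fun f => by
    simpa using (ContinuousMap.Homotopic.comp (ContinuousMap.Homotopic.refl f) hx)
  have : Nonempty X := ⟨x⟩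
  exact ((h1 f).trans (ContinuousMap.homotopic_const_iff.2
    (PathConnectedSpace.joined (f x) (g x)))).trans (h1 g).symm

variable {E M F : Type u} [TopologicalSpace E] [TopologicalSpace M] [TopologicalSpace F]
  {d : ℕ}

/-- A contractible family of sections can be deformed, by a homotopy supported in a given
neighborhood `V` of `Δ`, to a family agreeing with the germ on `Δ`. Over `Δ` the two families are
homotopic since `Δ` is contractible and the fiber is path-connected; the cofibration property
extends this homotopy over `D`, and a bump function `b` in the time variable cuts it off. -/
theorem exists_deformation [T2Space M] [LocallyCompactSpace M] [PathConnectedSpace F] {π : E → M}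
    (hπ : IsFiberBundle F π) {K : Type} [TopologicalSpace K] [LocallyCompactSpace K]
    [ContractibleSpace K] (g : GermData π) (hcpt : IsCompact g.Δ) (hcontr : ContractibleSpace g.Δ)
    {D : Set M} (hD : D ≃ₜ closedDisk d) (hgD : g.Δ ⊆ interior D)
    (hcof : ClosedCofibration (X := D) (Subtype.val ⁻¹' g.Δ))
    {V : Set M} (hV : IsOpen V) (hgV : g.Δ ⊆ V) (Φ : C(K, SectionSpace π)) :
    ∃ H : C(I × K, SectionSpace π), (∀ k, H (0, k) = Φ k) ∧
      (∀ t k x, x ∉ V → (H (t, k)).1 x = (Φ k).1 x) ∧ ∀ k, g.Fixes (H (1, k)) := by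
  classical
  obtain ⟨τ, κ, hτ, hκ, hπτ, hτκ⟩ := exists_trivialization_disk (F := F) hπ hD
  obtain ⟨b, hb1, -, hbV, hbI⟩ := exists_continuousMap_one_of_isCompact_subset_isOpen hcpt
    (isOpen_interior.inter hV) (Set.subset_inter hgD hgV)
  let bI : M → I := fun x => ⟨b x, hbI x⟩
  have hbI' : Continuous bI := b.continuous.subtype_mk _
  have ev : Continuous fun z : K × M => (Φ z.1).1 z.2 := by
    have h1 : Continuous fun k : K => (Φ k).1 := continuous_subtype_val.comp Φ.continuous
    fun_prop
  -- The family read in the trivialization.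
  let Φ' : C(K × D, F) := ⟨fun z => κ ⟨(z.2, (Φ z.1).1 z.2), (Φ z.1).2 _⟩, by
    refine hκ.comp (Continuous.subtype_mk (continuous_snd.prodMk ?_) _)
    exact ev.comp (continuous_fst.prodMk (continuous_subtype_val.comp continuous_snd))⟩
  let incl : g.Δ → D := fun x => ⟨x.1, interior_subset (hgD x.2)⟩
  have hincl : Continuous incl := continuous_subtype_val.subtype_mk _
  let p : C(K × g.Δ, F) := ⟨fun z => Φ' (z.1, incl z.2), by fun_prop⟩
  let q : C(K × g.Δ, F) := ⟨fun z => κ ⟨(incl z.2, g.sec ⟨z.2.1, g.subset z.2.2⟩), g.isSec _⟩, by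
    refine hκ.comp (Continuous.subtype_mk ((hincl.comp continuous_snd).prodMk ?_) _)
    exact g.sec.continuous.comp
      ((continuous_subtype_val.comp continuous_snd).subtype_mk fun z => g.subset z.2.2)⟩
  obtain ⟨hh⟩ := homotopic_of_contractible p q
  let f₀ : C(D, C(K, F)) := ContinuousMap.curry ⟨fun z : D × K => Φ' (z.2, z.1), by fun_prop⟩
  let A : Set D := Subtype.val ⁻¹' g.Δ
  let h₀ : C(A × I, C(K, F)) := ContinuousMap.curry
    ⟨fun z : (A × I) × K => hh (z.1.2, (z.2, (⟨z.1.1.1.1, z.1.1.2⟩ : g.Δ))), by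
      refine hh.continuous.comp (Continuous.prodMk (by fun_prop) (Continuous.prodMk (by fun_prop) ?_))
      exact Continuous.subtype_mk (by fun_prop) _⟩
  obtain ⟨G, hG0, hG1⟩ := hcof.2 (C(K, F)) f₀ h₀ (by
    intro a
    ext k
    have : hh (0, (k, (⟨a.1.1, a.2⟩ : g.Δ))) = p (k, ⟨a.1.1, a.2⟩) := hh.apply_zero _
    exact this)
  have hGc : Continuous fun z : (D × I) × K => G z.1 z.2 := by fun_prop
  let H₀ : (I × K) × M → E := fun z =>
    if hx : z.2 ∈ D then τ (⟨z.2, hx⟩, G (⟨z.2, hx⟩, bI z.2 * z.1.1) z.1.2)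
    else (Φ z.1.2).1 z.2
  have H₀_zero : ∀ z : (I × K) × M, bI z.2 * z.1.1 = 0 → H₀ z = (Φ z.1.2).1 z.2 := by
    intro z hz
    by_cases hx : z.2 ∈ D
    · simp only [H₀, dif_pos hx, hz, hG0]
      exact hτκ ⟨z.2, hx⟩ _ ((Φ z.1.2).2 _)
    · simp only [H₀, dif_neg hx]
  have H₀_off : ∀ z : (I × K) × M, z.2 ∉ tsupport b → H₀ z = (Φ z.1.2).1 z.2 := by
    intro z hz
    apply H₀_zero
    have : bI z.2 = 0 := Subtype.ext (image_eq_zero_of_notMem_tsupport (f := b) hz)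
    rw [this, zero_mul]
  have hH₀ : Continuous H₀ := by
    rw [← continuousOn_univ]
    have hcov : (Set.univ : Set ((I × K) × M)) =
        {z | z.2 ∈ interior D} ∪ {z | z.2 ∈ (tsupport b)ᶜ} := by
      symm
      rw [Set.eq_univ_iff_forall]
      intro z
      by_cases hz : z.2 ∈ tsupport b
      · exact Or.inl (hbV hz).1
      · exact Or.inr hz
    rw [hcov]
    refine ContinuousOn.union_of_isOpen ?_ ?_ (isOpen_interior.preimage continuous_snd)
      ((isClosed_tsupport b).isOpen_compl.preimage continuous_snd)
    · rw [continuousOn_iff_continuous_domRestrict]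
      have hc : Continuous fun z : {z : (I × K) × M | z.2 ∈ interior D} =>
          (⟨z.1.2, interior_subset z.2⟩ : D) := Continuous.subtype_mk (by fun_prop) _
      have : Continuous fun z : {z : (I × K) × M | z.2 ∈ interior D} =>
          τ (⟨z.1.2, interior_subset z.2⟩,
            G (⟨z.1.2, interior_subset z.2⟩, bI z.1.2 * z.1.1.1) z.1.1.2) := by
        refine hτ.comp (hc.prodMk ?_)
        refine hGc.comp (f := fun z : {z : (I × K) × M | z.2 ∈ interior D} =>
          (((⟨z.1.2, interior_subset z.2⟩, bI z.1.2 * z.1.1.1), z.1.1.2) : (D × I) × K)) ?_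
        refine Continuous.prodMk (hc.prodMk (Continuous.mul ?_ (by fun_prop))) (by fun_prop)
        exact hbI'.comp (by fun_prop)
      refine this.congr fun z => ?_
      have hz : z.1.2 ∈ D := interior_subset z.2
      simp only [Set.domRestrict_apply, H₀, dif_pos hz]
    · refine ContinuousOn.congr (f := fun z : (I × K) × M => (Φ z.1.2).1 z.2) ?_
        fun z hz => H₀_off z hz
      exact (ev.comp (f := fun z : (I × K) × M => (z.1.2, z.2)) (by fun_prop)).continuousOn
  have hsec : ∀ z, π (H₀ z) = z.2 := by
    intro z
    by_cases hx : z.2 ∈ D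
    · simp only [H₀, dif_pos hx, hπτ]
    · simp only [H₀, dif_neg hx]
      exact (Φ z.1.2).2 _
  let Hc : C(I × K, C(M, E)) := ContinuousMap.curry ⟨H₀, hH₀⟩
  refine ⟨⟨fun z => ⟨Hc z, fun x => hsec (z, x)⟩, Hc.continuous.subtype_mk _⟩, ?_, ?_, ?_⟩
  · intro k
    apply Subtype.ext
    ext x
    exact H₀_zero ((0, k), x) (mul_zero _)
  · intro t k x hx
    exact H₀_off ((t, k), x) fun h => hx (hbV h).2
  · intro k x hx
    have hxD : x ∈ D := interior_subset (hgD hx)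
    have hb : bI x = 1 := Subtype.ext (hb1 hx)
    change H₀ ((1, k), x) = _
    simp only [H₀, dif_pos hxD, hb, mul_one]
    have h1 : G (⟨x, hxD⟩, 1) = h₀ (⟨⟨x, hxD⟩, hx⟩, 1) := hG1 ⟨⟨x, hxD⟩, hx⟩ 1
    have h2 : h₀ (⟨⟨x, hxD⟩, hx⟩, 1) k = q (k, ⟨x, hx⟩) := hh.apply_one _
    rw [h1, h2]
    exact hτκ ⟨x, hxD⟩ _ (g.isSec ⟨x, g.subset hx⟩)

end Deformation

/-! ### Points of the realization and continuity of maps out of it -/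

section Realization

variable {E M : Type u} [TopologicalSpace E] [TopologicalSpace M]
  {π : E → M} {W : Set (GermData π)}

/-- The point of `||Y_•||` given by a tuple `g`, a section `f` fixing `g` and barycentric
coordinates `t`. -/
def mkY {p : ℕ} (g : TupW π W p) (f : relSections g.1) (t : stdSimplex ℝ (Fin (p + 1))) :
    YRealization π W :=
  Quot.mk _ ⟨p, ⟨g, f⟩, t⟩

theorem continuous_mkY {p : ℕ} (g : TupW π W p) :
    Continuous fun z : relSections g.1 × stdSimplex ℝ (Fin (p + 1)) => mkY g z.1 z.2 := by
  refine continuous_quot_mk.comp (continuous_sigmaMk.comp (Continuous.prodMk ?_ continuous_snd))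
  exact continuous_sigmaMk.comp continuous_fst

theorem exists_mkY (y : YRealization π W) :
    ∃ (p : ℕ) (g : TupW π W p) (f : relSections g.1) (t : stdSimplex ℝ (Fin (p + 1))),
      y = mkY g f t := by
  rcases y with ⟨p, ⟨g, f⟩, t⟩
  exact ⟨p, g, f, t, rfl⟩

@[simp] theorem forgetY_mkY {p : ℕ} (g : TupW π W p) (f : relSections g.1)
    (t : stdSimplex ℝ (Fin (p + 1))) : forgetY π W (mkY g f t) = f.1 := rfl

theorem mkY_simplexFace {p : ℕ} (i : Fin (p + 2)) (g : TupW π W (p + 1)) (f : relSections g.1)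
    (t : stdSimplex ℝ (Fin (p + 1))) :
    mkY g f (simplexFace i t) = mkY (g.face i) ⟨f.1, fun j => f.2 (i.succAbove j)⟩ t :=
  (Quot.sound (YRel.glue p i ⟨g, f⟩ t)).symm

/-- A map out of `T × ||Y_•||` with `T` locally compact is continuous as soon as it is continuous
on each `T × Γ(E, Δ_0, …, Δ_p) × Δ^p`. -/
theorem continuous_prod_realization {T : Type v} {Z : Type w} [TopologicalSpace T]
    [LocallyCompactSpace T] [TopologicalSpace Z] (F : T × YRealization π W → Z)
    (h : ∀ (p : ℕ) (g : TupW π W p), Continuous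
      fun z : T × (relSections g.1 × stdSimplex ℝ (Fin (p + 1))) =>
        F (z.1, mkY g z.2.1 z.2.2)) : Continuous F := by
  have h0 : ∀ y, Continuous fun t => F (t, y) := by
    intro y
    obtain ⟨p, g, f, t, rfl⟩ := exists_mkY y
    exact (h p g).comp (f := fun s : T => (s, (f, t))) (by fun_prop)
  let G : YRealization π W → C(T, Z) := fun y => ⟨fun t => F (t, y), h0 y⟩
  have hG : Continuous G := by
    rw [isQuotientMap_quot_mk.continuous_iff]
    refine continuous_sigma fun p => ?_
    rw [← (Homeomorph.sigmaProdDistrib (Y := stdSimplex ℝ (Fin (p + 1)))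
      (X := fun g : TupW π W p => ↥(relSections g.1))).symm.comp_continuous_iff']
    refine continuous_sigma fun g => ?_
    refine ContinuousMap.continuous_of_continuous_uncurry _ ?_
    exact (h p g).comp (f := fun z : (relSections g.1 × stdSimplex ℝ (Fin (p + 1))) × T =>
      (z.2, z.1)) (by fun_prop)
  have : Continuous fun z : T × YRealization π W => G z.2 z.1 := by fun_prop
  exact this

theorem continuous_realization {Z : Type w} [TopologicalSpace Z] (F : YRealization π W → Z)
    (h : ∀ (p : ℕ) (g : TupW π W p), Continuous
      fun z : relSections g.1 × stdSimplex ℝ (Fin (p + 1)) => F (mkY g z.1 z.2)) :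
    Continuous F :=
  (continuous_prod_realization (T := Unit) (fun z => F z.2)
    fun p g => (h p g).comp continuous_snd).comp
      (f := fun y : YRealization π W => ((), y)) (by fun_prop)

theorem continuous_forgetY : Continuous (forgetY π W) :=
  continuous_realization _ fun _ _ => continuous_subtype_val.comp continuous_fst

/-- A map into `||Y_•||` is continuous if locally it has a fixed tuple and continuously varying
barycentric coordinates, over a continuous family of sections. -/
theorem continuous_of_local_mkY {X : Type v} [TopologicalSpace X] (F : X → YRealization π W)
    (f : X → SectionSpace π) (hf : Continuous f)
    (h : ∀ x, ∃ U : Set X, IsOpen U ∧ x ∈ U ∧ ∃ (p : ℕ) (g : TupW π W p)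
      (θ : X → stdSimplex ℝ (Fin (p + 1))), ContinuousOn θ U ∧
        ∀ x ∈ U, ∃ hx : f x ∈ relSections g.1, F x = mkY g ⟨f x, hx⟩ (θ x)) :
    Continuous F := by
  rw [continuous_iff_continuousAt]
  intro x
  obtain ⟨U, hU, hxU, p, g, θ, hθ, hF⟩ := h x
  refine ContinuousOn.continuousAt ?_ (hU.mem_nhds hxU)
  rw [continuousOn_iff_continuous_domRestrict] at hθ ⊢
  have : Continuous fun z : U => mkY g ⟨f z.1, (hF z.1 z.2).1⟩ (θ z.1) :=
    (continuous_mkY g).comp (f := fun z : U =>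
      ((⟨f z.1, (hF z.1 z.2).1⟩, θ z.1) : relSections g.1 × stdSimplex ℝ (Fin (p + 1))))
      (Continuous.prodMk ((hf.comp continuous_subtype_val).subtype_mk _) hθ)
  refine this.congr fun z => ?_
  exact (hF z.1 z.2).2.symm

/-! ### Normal forms for points of the realization -/

theorem simplexFace_apply_self {p : ℕ} (i : Fin (p + 2)) (t : stdSimplex ℝ (Fin (p + 1))) :
    (simplexFace i t).1 i = 0 := by simp [simplexFace]

theorem simplexFace_apply_succAbove {p : ℕ} (i : Fin (p + 2)) (t : stdSimplex ℝ (Fin (p + 1)))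
    (j : Fin (p + 1)) : (simplexFace i t).1 (i.succAbove j) = t.1 j := by simp [simplexFace]

theorem exists_simplexFace {p : ℕ} (i : Fin (p + 2)) (t : stdSimplex ℝ (Fin (p + 2)))
    (hi : t.1 i = 0) : ∃ t' : stdSimplex ℝ (Fin (p + 1)),
      t = simplexFace i t' ∧ ∀ j, t'.1 j = t.1 (i.succAbove j) := by
  refine ⟨⟨fun j => t.1 (i.succAbove j), fun j => t.2.1 _, ?_⟩, ?_, fun _ => rfl⟩
  · have := t.2.2
    rw [Fin.sum_univ_succAbove _ i, hi, zero_add] at this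
    exact this
  · apply Subtype.ext
    funext j
    rcases eq_or_ne j i with rfl | hj
    · exact hi.trans (simplexFace_apply_self _ _).symm
    · obtain ⟨k, rfl⟩ := Fin.exists_succAbove_eq hj
      rw [simplexFace_apply_succAbove]

theorem filter_ofFn_succAbove {α : Type v} (P : α → Bool) :
    ∀ {n : ℕ} (h : Fin (n + 1) → α) (i : Fin (n + 1)), P (h i) = false →
      (List.ofFn h).filter P = (List.ofFn fun j => h (i.succAbove j)).filter P := by
  intro n
  induction n with
  | zero =>
    intro h i hi
    have : i = 0 := Subsingleton.elim (α := Fin 1) i 0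
    subst this
    simp [hi]
  | succ n ih =>
    intro h i
    refine Fin.cases ?_ (fun k => ?_) i
    · intro hi
      rw [List.ofFn_succ, List.filter_cons_of_neg (by simp [hi])]
      simp
    · intro hi
      rw [List.ofFn_succ, List.ofFn_succ (f := fun j => h (k.succ.succAbove j)), List.filter_cons,
        List.filter_cons, ih (fun j => h j.succ) k hi]
      simp [Fin.succ_succAbove_succ]

/-- The normal form of a point of `||Y_•||`: the list of its germs with their nonzero barycentric
coordinates. Together with the underlying section it determines the point. -/
noncomputable def normalForm : YRealization π W → List (GermData π × ℝ) :=
  Quot.lift (fun a => (List.ofFn fun i => (a.2.1.1.1 i, a.2.2.1 i)).filter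
      fun z => decide (z.2 ≠ 0)) (by
    rintro _ _ ⟨p, i, y, t⟩
    symm
    refine (filter_ofFn_succAbove _ (fun j => (y.1.1 j, (simplexFace i t).1 j)) i ?_).trans ?_
    · simp [simplexFace_apply_self]
    · simp only [simplexFace_apply_succAbove]
      rfl)

theorem normalForm_mkY {p : ℕ} (g : TupW π W p) (f : relSections g.1)
    (t : stdSimplex ℝ (Fin (p + 1))) : normalForm (mkY g f t) =
      (List.ofFn fun i => (g.1 i, t.1 i)).filter fun z => decide (z.2 ≠ 0) := rfl

/-- Every point is represented with all barycentric coordinates positive. -/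
theorem exists_mkY_pos (y : YRealization π W) :
    ∃ (p : ℕ) (g : TupW π W p) (f : relSections g.1) (t : stdSimplex ℝ (Fin (p + 1))),
      (∀ i, 0 < t.1 i) ∧ y = mkY g f t := by
  obtain ⟨p, g, f, t, rfl⟩ := exists_mkY y
  induction p with
  | zero =>
    refine ⟨0, g, f, t, fun i => ?_, rfl⟩
    have := t.2.2
    rw [Fin.sum_univ_one] at this
    rw [show i = 0 from Subsingleton.elim (α := Fin 1) i 0, this]
    exact one_pos
  | succ p ih =>
    by_cases h : ∀ i, 0 < t.1 i
    · exact ⟨p + 1, g, f, t, h, rfl⟩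
    · push Not at h
      obtain ⟨i, hi⟩ := h
      obtain ⟨t', rfl, -⟩ := exists_simplexFace i t (le_antisymm hi (t.2.1 i))
      rw [mkY_simplexFace]
      exact ih _ _ _

theorem eq_of_normalForm_eq {y y' : YRealization π W} (hf : forgetY π W y = forgetY π W y')
    (hn : normalForm y = normalForm y') : y = y' := by
  obtain ⟨p, g, f, t, ht, rfl⟩ := exists_mkY_pos y
  obtain ⟨p', g', f', t', ht', rfl⟩ := exists_mkY_pos y'
  rw [normalForm_mkY, normalForm_mkY, List.filter_eq_self.2, List.filter_eq_self.2] at hn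
  · have h1 : p = p' := by simpa using congrArg List.length hn
    subst h1
    have h2 := List.ofFn_injective hn
    have h3 : g = g' := Subtype.ext (funext fun i => congrArg Prod.fst (congrFun h2 i))
    subst h3
    have h4 : t = t' := Subtype.ext (funext fun i => congrArg Prod.snd (congrFun h2 i))
    subst h4
    have h5 : f = f' := Subtype.ext hf
    rw [h5]
  · intro a ha
    obtain ⟨i, rfl⟩ := List.mem_ofFn.1 ha
    simpa using (ht' i).ne'
  · intro a ha
    obtain ⟨i, rfl⟩ := List.mem_ofFn.1 ha
    simpa using (ht i).ne'

/-- Equality of two points over a section `f` persists when `f` is replaced by another section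
fixing both tuples. -/
theorem mkY_congr_section {p p' : ℕ} {g : TupW π W p} {g' : TupW π W p'}
    {t : stdSimplex ℝ (Fin (p + 1))} {t' : stdSimplex ℝ (Fin (p' + 1))} {f₁ : relSections g.1}
    {f₂ : relSections g'.1} (h : mkY g f₁ t = mkY g' f₂ t') {f : SectionSpace π}
    (hf : f ∈ relSections g.1) (hf' : f ∈ relSections g'.1) :
    mkY g ⟨f, hf⟩ t = mkY g' ⟨f, hf'⟩ t' :=
  eq_of_normalForm_eq rfl (by
    have := congrArg normalForm h
    rwa [normalForm_mkY, normalForm_mkY] at this)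

/-! ### Joining with a further germ -/

/-- The tuple `(w, g_0, …, g_p)`. -/
def coneTup {p : ℕ} (w : GermData π) (hw : w ∈ W) (g : TupW π W p)
    (h : ∀ i, Disjoint w.Δ (g.1 i).Δ) : TupW π W (p + 1) :=
  ⟨Fin.cons w g.1, fun i => by
    refine Fin.cases ?_ (fun j => ?_) i
    · exact hw
    · exact g.2.1 j, fun i j => by
    refine Fin.cases ?_ (fun i => ?_) i <;> refine Fin.cases ?_ (fun j => ?_) j
    · simp
    · intro _; simpa using h j
    · intro _; simpa using (h i).symm
    · intro hij; simpa using g.2.2 i j (by simpa using hij)⟩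

/-- The point of `Δ^{p+1}` on the segment from `t` in the zeroth face to the zeroth vertex. -/
def conePt {p : ℕ} (s : I) (t : stdSimplex ℝ (Fin (p + 1))) : stdSimplex ℝ (Fin (p + 2)) :=
  ⟨Fin.cons s.1 fun j => (1 - s.1) * t.1 j, fun i => by
    refine Fin.cases ?_ (fun j => ?_) i
    · exact s.2.1
    · exact mul_nonneg (sub_nonneg.2 s.2.2) (t.2.1 j), by
    rw [Fin.sum_univ_succ]
    simp only [Fin.cons_zero, Fin.cons_succ, ← Finset.mul_sum, t.2.2]
    ring⟩

theorem continuous_conePt {p : ℕ} :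
    Continuous fun z : I × stdSimplex ℝ (Fin (p + 1)) => conePt z.1 z.2 := by
  refine Continuous.subtype_mk (continuous_pi fun i => ?_) _
  refine Fin.cases ?_ (fun j => ?_) i
  · simp only [Fin.cons_zero]
    fun_prop
  · simp only [Fin.cons_succ]
    have : Continuous fun z : I × stdSimplex ℝ (Fin (p + 1)) => z.2.1 j :=
      (continuous_apply j).comp (continuous_subtype_val.comp continuous_snd)
    fun_prop

/-- The tuple consisting of `w` alone. -/
def singleTup (w : GermData π) (hw : w ∈ W) : TupW π W 0 :=
  ⟨fun _ => w, fun _ => hw, fun i j h => absurd (Subsingleton.elim (α := Fin 1) i j) h⟩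

/-- The point of `||Y_•||` on the vertex `w`. -/
noncomputable def vertexY (w : GermData π) (hw : w ∈ W) (f : SectionSpace π) (hf : w.Fixes f) :
    YRealization π W :=
  mkY (singleTup w hw) ⟨f, fun _ => hf⟩ ⟨fun _ => 1, by simp [stdSimplex]⟩

theorem fixes_coneTup {p : ℕ} {w : GermData π} {hw : w ∈ W} {g : TupW π W p}
    {h : ∀ i, Disjoint w.Δ (g.1 i).Δ} {f : SectionSpace π} (hf : w.Fixes f)
    (hg : f ∈ relSections g.1) : f ∈ relSections (coneTup w hw g h).1 := by
  intro i
  refine Fin.cases ?_ (fun j => ?_) i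
  · exact hf
  · exact hg j

theorem normalForm_cone {p : ℕ} {w : GermData π} {hw : w ∈ W} {g : TupW π W p}
    {h : ∀ i, Disjoint w.Δ (g.1 i).Δ} (s : I) (f : relSections (coneTup w hw g h).1)
    (f' : relSections g.1) (t : stdSimplex ℝ (Fin (p + 1))) :
    normalForm (mkY (coneTup w hw g h) f (conePt s t)) =
      ([(w, s.1)] ++ (normalForm (mkY g f' t)).map fun z => (z.1, (1 - s.1) * z.2)).filter
        fun z => decide (z.2 ≠ 0) := by
  rw [normalForm_mkY, normalForm_mkY, List.ofFn_succ, List.singleton_append]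
  have h1 : (List.ofFn fun i : Fin (p + 1) =>
      ((coneTup w hw g h).1 i.succ, (conePt s t).1 i.succ)) =
      (List.ofFn fun i => (g.1 i, t.1 i)).map fun z => (z.1, (1 - s.1) * z.2) := by
    rw [List.map_ofFn]
    rfl
  have h2 : ∀ l : List (GermData π × ℝ),
      (l.map fun z => (z.1, (1 - s.1) * z.2)).filter (fun z => decide (z.2 ≠ 0)) =
      ((l.filter fun z => decide (z.2 ≠ 0)).map fun z => (z.1, (1 - s.1) * z.2)).filter
        (fun z => decide (z.2 ≠ 0)) := by
    intro l
    induction l with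
    | nil => rfl
    | cons a l ih =>
      by_cases ha : a.2 = 0
      · simpa [ha] using ih
      · simp only [List.map_cons, List.filter_cons, ih, ha, ne_eq, not_false_eq_true, decide_true,
          if_true]
  rw [h1, List.filter_cons, List.filter_cons, ← h2]
  rfl

/-- A cone depends only on the point of `||Y_•||` which is coned off. -/
theorem cone_congr {p p' : ℕ} {w : GermData π} {hw : w ∈ W} {g : TupW π W p} {g' : TupW π W p'}
    {h : ∀ i, Disjoint w.Δ (g.1 i).Δ} {h' : ∀ i, Disjoint w.Δ (g'.1 i).Δ} (s : I)
    {f : SectionSpace π} (hw : w.Fixes f) (hg : f ∈ relSections g.1) (hg' : f ∈ relSections g'.1)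
    {t : stdSimplex ℝ (Fin (p + 1))} {t' : stdSimplex ℝ (Fin (p' + 1))}
    (e : mkY g ⟨f, hg⟩ t = mkY g' ⟨f, hg'⟩ t') :
    mkY (coneTup w ‹_› g h) ⟨f, fixes_coneTup hw hg⟩ (conePt s t) =
      mkY (coneTup w ‹_› g' h') ⟨f, fixes_coneTup hw hg'⟩ (conePt s t') := by
  refine eq_of_normalForm_eq rfl ?_
  rw [normalForm_cone s _ ⟨f, hg⟩, normalForm_cone s _ ⟨f, hg'⟩, e]

theorem cone_zero {p : ℕ} {w : GermData π} {hW : w ∈ W} {g : TupW π W p}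
    {h : ∀ i, Disjoint w.Δ (g.1 i).Δ} {f : SectionSpace π} (hw : w.Fixes f)
    (hg : f ∈ relSections g.1) (t : stdSimplex ℝ (Fin (p + 1))) :
    mkY (coneTup w hW g h) ⟨f, fixes_coneTup hw hg⟩ (conePt 0 t) = mkY g ⟨f, hg⟩ t := by
  refine eq_of_normalForm_eq rfl ?_
  rw [normalForm_cone 0 _ ⟨f, hg⟩]
  simp [normalForm_mkY]

theorem cone_one {p : ℕ} {w : GermData π} {hW : w ∈ W} {g : TupW π W p}
    {h : ∀ i, Disjoint w.Δ (g.1 i).Δ} {f : SectionSpace π} (hw : w.Fixes f)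
    (hg : f ∈ relSections g.1) (t : stdSimplex ℝ (Fin (p + 1))) :
    mkY (coneTup w hW g h) ⟨f, fixes_coneTup hw hg⟩ (conePt 1 t) = vertexY w hW f hw := by
  refine eq_of_normalForm_eq rfl ?_
  rw [normalForm_cone 1 _ ⟨f, hg⟩, vertexY, normalForm_mkY (singleTup w hW), List.filter_append,
    (List.filter_eq_nil_iff (l := List.map _ _)).2]
  · simp [singleTup]
  · intro a ha
    obtain ⟨b, -, rfl⟩ := List.mem_map.1 ha
    simp

end Realization

/-! ### Pushing small barycentric coordinates to zero -/

section Squish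

/-- Rescale a nonnegative vector with positive sum to a point of the simplex (with a junk value at
all other vectors). -/
noncomputable def toSimplex {p : ℕ} (v : Fin (p + 1) → ℝ) : stdSimplex ℝ (Fin (p + 1)) :=
  open Classical in
  if h : (∀ i, 0 ≤ v i) ∧ 0 < ∑ i, v i then
    ⟨fun i => v i / ∑ j, v j, fun i => div_nonneg (h.1 i) h.2.le, by
      rw [← Finset.sum_div, div_self h.2.ne']⟩
  else ⟨Pi.single 0 1, single_mem_stdSimplex ℝ 0⟩

theorem toSimplex_apply {p : ℕ} {v : Fin (p + 1) → ℝ} (h : ∀ i, 0 ≤ v i) (h' : 0 < ∑ i, v i)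
    (i : Fin (p + 1)) : (toSimplex v).1 i = v i / ∑ j, v j := by
  rw [toSimplex, dif_pos ⟨h, h'⟩]

theorem continuousOn_toSimplex {p : ℕ} :
    ContinuousOn (toSimplex (p := p)) {v | (∀ i, 0 ≤ v i) ∧ 0 < ∑ i, v i} := by
  rw [continuousOn_iff_continuous_domRestrict]
  refine continuous_induced_rng.2 ?_
  have : Continuous fun v : {v : Fin (p + 1) → ℝ | (∀ i, 0 ≤ v i) ∧ 0 < ∑ i, v i} =>
      (fun i => v.1 i / ∑ j, v.1 j : Fin (p + 1) → ℝ) := by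
    have h : ∀ i, Continuous fun v : {v : Fin (p + 1) → ℝ | (∀ i, 0 ≤ v i) ∧ 0 < ∑ i, v i} =>
        v.1 i := fun i => (continuous_apply i).comp continuous_subtype_val
    exact continuous_pi fun i => (h i).div (continuous_finsetSum _ fun j _ => h j)
      fun v => v.2.2.ne'
  refine this.congr fun v => ?_
  funext i
  exact (toSimplex_apply v.2.1 v.2.2 i).symm

/-- Half the sum of squares of the coordinates: a threshold which depends continuously on a point
of a simplex, is compatible with face inclusions, and lies strictly between zero and the largest
coordinate. -/
noncomputable def thresh {n : ℕ} (t : Fin n → ℝ) : ℝ := (∑ i, t i ^ 2) / 2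

theorem continuous_thresh {n : ℕ} : Continuous (thresh (n := n)) := by
  unfold thresh
  fun_prop

theorem thresh_simplexFace {p : ℕ} (i : Fin (p + 2)) (t : stdSimplex ℝ (Fin (p + 1))) :
    thresh (simplexFace i t).1 = thresh t.1 := by
  unfold thresh
  rw [Fin.sum_univ_succAbove _ i]
  simp [simplexFace_apply_self, simplexFace_apply_succAbove]

theorem thresh_pos {n : ℕ} (t : stdSimplex ℝ (Fin n)) : 0 < thresh t.1 := by
  refine half_pos (lt_of_le_of_ne (Finset.sum_nonneg fun i _ => sq_nonneg _) fun h => ?_)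
  rw [eq_comm, Finset.sum_eq_zero_iff_of_nonneg fun i _ => sq_nonneg _] at h
  have h1 := t.2.2
  rw [Finset.sum_eq_zero fun i hi => pow_eq_zero_iff (two_ne_zero) |>.1 (h i hi)] at h1
  exact zero_ne_one h1

theorem exists_thresh_lt {n : ℕ} (t : stdSimplex ℝ (Fin n)) : ∃ i, thresh t.1 < t.1 i := by
  by_contra! h
  have h1 : ∑ i, t.1 i ^ 2 ≤ ∑ i, thresh t.1 * t.1 i :=
    Finset.sum_le_sum fun i _ => by
      rw [sq]
      exact mul_le_mul_of_nonneg_right (h i) (t.2.1 i)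
  rw [← Finset.mul_sum, t.2.2, mul_one] at h1
  have h2 := thresh_pos t
  have h3 : ∑ i, t.1 i ^ 2 = 2 * thresh t.1 := by unfold thresh; ring
  linarith

/-- Subtract `s` times the threshold from all coordinates, cutting off at zero. -/
noncomputable def cut {n : ℕ} (s : ℝ) (t : Fin n → ℝ) : Fin n → ℝ :=
  fun i => max (t i - s * thresh t) 0

theorem cut_nonneg {n : ℕ} (s : ℝ) (t : Fin n → ℝ) (i : Fin n) : 0 ≤ cut s t i := le_max_right _ _

theorem cut_sum_pos {n : ℕ} (s : I) (t : stdSimplex ℝ (Fin n)) : 0 < ∑ i, cut s.1 t.1 i := by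
  obtain ⟨i, hi⟩ := exists_thresh_lt t
  refine Finset.sum_pos' (fun i _ => cut_nonneg _ _ _) ⟨i, Finset.mem_univ _, ?_⟩
  refine lt_max_of_lt_left ?_
  have := mul_le_mul_of_nonneg_right s.2.2 (thresh_pos t).le
  linarith

/-- The homotopy of `Δ^p` which at time one kills all coordinates below the threshold. -/
noncomputable def squish {p : ℕ} (s : I) (t : stdSimplex ℝ (Fin (p + 1))) :
    stdSimplex ℝ (Fin (p + 1)) :=
  toSimplex (cut s.1 t.1)

theorem squish_apply {p : ℕ} (s : I) (t : stdSimplex ℝ (Fin (p + 1))) (i : Fin (p + 1)) :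
    (squish s t).1 i = cut s.1 t.1 i / ∑ j, cut s.1 t.1 j :=
  toSimplex_apply (cut_nonneg _ _) (cut_sum_pos s t) i

theorem continuous_squish {p : ℕ} :
    Continuous fun z : I × stdSimplex ℝ (Fin (p + 1)) => squish z.1 z.2 := by
  refine continuousOn_toSimplex.comp_continuous (f := fun z : I × stdSimplex ℝ (Fin (p + 1)) =>
    cut z.1.1 z.2.1) ?_ fun z => ⟨cut_nonneg _ _, cut_sum_pos _ _⟩
  refine continuous_pi fun i => ?_
  have h1 : Continuous fun z : I × stdSimplex ℝ (Fin (p + 1)) => z.2.1 i :=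
    (continuous_apply i).comp (continuous_subtype_val.comp continuous_snd)
  have h2 : Continuous fun z : I × stdSimplex ℝ (Fin (p + 1)) => thresh z.2.1 :=
    continuous_thresh.comp (continuous_subtype_val.comp continuous_snd)
  unfold cut
  fun_prop

theorem squish_zero {p : ℕ} (t : stdSimplex ℝ (Fin (p + 1))) : squish 0 t = t := by
  apply Subtype.ext
  funext i
  have h : ∀ j, cut ((0 : I) : ℝ) t.1 j = t.1 j := fun j => by
    simp only [cut, Set.Icc.coe_zero, zero_mul, sub_zero]
    exact max_eq_left (t.2.1 j)
  rw [squish_apply]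
  simp only [h]
  rw [t.2.2, div_one]

theorem cut_simplexFace_succAbove {p : ℕ} (s : ℝ) (i : Fin (p + 2))
    (t : stdSimplex ℝ (Fin (p + 1))) (j : Fin (p + 1)) :
    cut s (simplexFace i t).1 (i.succAbove j) = cut s t.1 j := by
  simp only [cut, thresh_simplexFace, simplexFace_apply_succAbove]

theorem cut_simplexFace_self {p : ℕ} (s : I) (i : Fin (p + 2))
    (t : stdSimplex ℝ (Fin (p + 1))) : cut s.1 (simplexFace i t).1 i = 0 := by
  simp only [cut, thresh_simplexFace, simplexFace_apply_self]
  refine max_eq_right ?_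
  have := mul_nonneg s.2.1 (thresh_pos t).le
  linarith

theorem squish_simplexFace {p : ℕ} (s : I) (i : Fin (p + 2)) (t : stdSimplex ℝ (Fin (p + 1))) :
    squish s (simplexFace i t) = simplexFace i (squish s t) := by
  apply Subtype.ext
  funext j
  rw [squish_apply, Fin.sum_univ_succAbove _ i, cut_simplexFace_self, zero_add]
  simp only [cut_simplexFace_succAbove]
  rcases eq_or_ne j i with rfl | hj
  · rw [simplexFace_apply_self, cut_simplexFace_self, zero_div]
  · obtain ⟨k, rfl⟩ := Fin.exists_succAbove_eq hj
    rw [simplexFace_apply_succAbove, squish_apply, cut_simplexFace_succAbove]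

variable {E M : Type u} [TopologicalSpace E] [TopologicalSpace M]
  {π : E → M} {W : Set (GermData π)}

/-- The homotopy of `||Y_•||` over `Γ(E)` induced by the homotopies `squish` of the simplices. -/
noncomputable def squishY (s : I) : YRealization π W → YRealization π W :=
  Quot.map (fun a => ⟨a.1, a.2.1, squish s a.2.2⟩) (by
    rintro _ _ ⟨p, i, y, t⟩
    dsimp only
    rw [squish_simplexFace]
    exact YRel.glue p i y _)

theorem squishY_mkY (s : I) {p : ℕ} (g : TupW π W p) (f : relSections g.1)
    (t : stdSimplex ℝ (Fin (p + 1))) : squishY s (mkY g f t) = mkY g f (squish s t) := rfl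

theorem continuous_squishY :
    Continuous fun z : I × YRealization π W => squishY z.1 z.2 := by
  refine continuous_prod_realization _ fun p g => ?_
  simp only [squishY_mkY]
  refine (continuous_mkY g).comp (f := fun z : I × (relSections g.1 × stdSimplex ℝ (Fin (p + 1))) =>
    (z.2.1, squish z.1 z.2.2)) (Continuous.prodMk (by fun_prop) ?_)
  exact continuous_squish.comp
    (f := fun z : I × (relSections g.1 × stdSimplex ℝ (Fin (p + 1))) => (z.1, z.2.2)) (by fun_prop)

theorem squishY_zero (y : YRealization π W) : squishY 0 y = y := by
  obtain ⟨p, g, f, t, rfl⟩ := exists_mkY y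
  rw [squishY_mkY, squish_zero]

theorem forgetY_squishY (s : I) (y : YRealization π W) :
    forgetY π W (squishY s y) = forgetY π W y := by
  obtain ⟨p, g, f, t, rfl⟩ := exists_mkY y
  rfl

/-! ### Local structure of the realization -/

/-- The barycentric coordinate of a point of `||Y_•||` at a germ. -/
noncomputable def coordY (w : GermData π) : YRealization π W → ℝ :=
  open Classical in
  Quot.lift (fun a => ∑ i, if a.2.1.1.1 i = w then a.2.2.1 i else 0) (by
    rintro _ _ ⟨p, i, y, t⟩
    dsimp only
    rw [Fin.sum_univ_succAbove _ i]
    simp only [simplexFace_apply_self, simplexFace_apply_succAbove, ite_self, zero_add]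
    rfl)

/-- The threshold as a function on `||Y_•||`. -/
noncomputable def threshY : YRealization π W → ℝ :=
  Quot.lift (fun a => thresh a.2.2.1) (by
    rintro _ _ ⟨p, i, y, t⟩
    exact (thresh_simplexFace i t).symm)

open Classical in
theorem coordY_mkY (w : GermData π) {p : ℕ} (g : TupW π W p) (f : relSections g.1)
    (t : stdSimplex ℝ (Fin (p + 1))) :
    coordY w (mkY g f t) = ∑ i, if g.1 i = w then t.1 i else 0 := rfl

theorem threshY_mkY {p : ℕ} (g : TupW π W p) (f : relSections g.1)
    (t : stdSimplex ℝ (Fin (p + 1))) : threshY (mkY g f t) = thresh t.1 := rfl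

theorem continuous_coordY (w : GermData π) : Continuous (coordY (W := W) w) := by
  classical
  refine continuous_realization _ fun p g => ?_
  simp only [coordY_mkY]
  refine continuous_finsetSum _ fun i _ => ?_
  by_cases h : g.1 i = w
  · simp only [h, if_true]
    exact (continuous_apply i).comp (continuous_subtype_val.comp continuous_snd)
  · simp only [h, if_false]
    exact continuous_const

theorem continuous_threshY : Continuous (threshY (π := π) (W := W)) := by
  refine continuous_realization _ fun p g => ?_
  simp only [threshY_mkY]
  exact continuous_thresh.comp (continuous_subtype_val.comp continuous_snd)

theorem coordY_mkY_self (hW : ∀ g ∈ W, g.Δ.Nonempty) {p : ℕ} (g : TupW π W p)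
    (f : relSections g.1) (t : stdSimplex ℝ (Fin (p + 1))) (i : Fin (p + 1)) :
    coordY (g.1 i) (mkY g f t) = t.1 i := by
  classical
  rw [coordY_mkY, Finset.sum_eq_single i]
  · simp
  · intro j _ hj
    refine if_neg fun h => ?_
    have := g.2.2 j i hj
    rw [h, disjoint_self] at this
    exact (hW _ (g.2.1 i)).ne_empty this
  · simp

/-- `g₀` is a subtuple of `g` at which the coordinates `t` are positive and outside of which they are
below the threshold. -/
def MainPart {p : ℕ} (g₀ : Fin (p + 1) → GermData π) {r : ℕ} (g : Fin (r + 1) → GermData π)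
    (t : Fin (r + 1) → ℝ) : Prop :=
  ∃ ι : Fin (p + 1) → Fin (r + 1), StrictMono ι ∧ (∀ j, g (ι j) = g₀ j) ∧ (∀ j, 0 < t (ι j)) ∧
    ∀ i, i ∉ Set.range ι → t i < thresh t

theorem exists_factor_succAbove {p r : ℕ} {ι : Fin (p + 1) → Fin (r + 2)} (hι : StrictMono ι)
    {i : Fin (r + 2)} (hi : i ∉ Set.range ι) :
    ∃ ι' : Fin (p + 1) → Fin (r + 1), StrictMono ι' ∧ ∀ j, ι j = i.succAbove (ι' j) := by
  have : ∀ j, ∃ k, i.succAbove k = ι j := fun j =>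
    Fin.exists_succAbove_eq fun h => hi ⟨j, h⟩
  choose ι' hι' using this
  refine ⟨ι', fun a b hab => ?_, fun j => (hι' j).symm⟩
  rw [← Fin.succAbove_lt_succAbove_iff (p := i), hι', hι']
  exact hι hab

theorem mainPart_simplexFace {p : ℕ} (g₀ : Fin (p + 1) → GermData π) {r : ℕ}
    (g : Fin (r + 2) → GermData π) (i : Fin (r + 2)) (t : stdSimplex ℝ (Fin (r + 1))) :
    MainPart g₀ g (simplexFace i t).1 ↔ MainPart g₀ (fun j => g (i.succAbove j)) t.1 := by
  constructor
  · rintro ⟨ι, hι, hg, hpos, hlt⟩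
    have hi : i ∉ Set.range ι := by
      rintro ⟨j, rfl⟩
      have := hpos j
      rw [simplexFace_apply_self] at this
      exact lt_irrefl _ this
    obtain ⟨ι', hι', e⟩ := exists_factor_succAbove hι hi
    refine ⟨ι', hι', fun j => (congrArg g (e j)).symm.trans (hg j), fun j => ?_, fun k hk => ?_⟩
    · have := hpos j
      rwa [e, simplexFace_apply_succAbove] at this
    · have := hlt (i.succAbove k) (by
        rintro ⟨j, hj⟩
        rw [e] at hj
        exact hk ⟨j, Fin.succAbove_right_injective hj⟩)
      rwa [simplexFace_apply_succAbove, thresh_simplexFace] at this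
  · rintro ⟨ι, hι, hg, hpos, hlt⟩
    refine ⟨fun j => i.succAbove (ι j), (Fin.strictMono_succAbove i).comp hι, hg, fun j => ?_,
      fun k hk => ?_⟩
    · rw [simplexFace_apply_succAbove]
      exact hpos j
    · rw [thresh_simplexFace]
      rcases eq_or_ne k i with rfl | hki
      · rw [simplexFace_apply_self]
        exact thresh_pos t
      · obtain ⟨k, rfl⟩ := Fin.exists_succAbove_eq hki
        rw [simplexFace_apply_succAbove]
        refine hlt k ?_
        rintro ⟨j, rfl⟩
        exact hk ⟨j, rfl⟩

/-- The property `MainPart` as a property of points of `||Y_•||`. -/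
def MainPartY {p : ℕ} (g₀ : Fin (p + 1) → GermData π) : YRealization π W → Prop :=
  Quot.lift (fun a => MainPart g₀ a.2.1.1.1 a.2.2.1) (by
    rintro _ _ ⟨p, i, y, t⟩
    exact (propext (mainPart_simplexFace g₀ y.1.1 i t)).symm)

theorem mainPartY_mkY {p : ℕ} (g₀ : Fin (p + 1) → GermData π) {r : ℕ} (g : TupW π W r)
    (f : relSections g.1) (t : stdSimplex ℝ (Fin (r + 1))) :
    MainPartY g₀ (mkY g f t) ↔ MainPart g₀ g.1 t.1 := Iff.rfl

theorem isOpen_mainPartY {p : ℕ} (g₀ : Fin (p + 1) → GermData π) :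
    IsOpen {y : YRealization π W | MainPartY g₀ y} := by
  rw [← continuous_Prop]
  refine continuous_realization _ fun r g => ?_
  rw [continuous_Prop]
  simp only [mainPartY_mkY]
  have h : IsOpen {t : stdSimplex ℝ (Fin (r + 1)) | MainPart g₀ g.1 t.1} := by
    have h1 : ∀ i, Continuous fun t : stdSimplex ℝ (Fin (r + 1)) => t.1 i := fun i =>
      (continuous_apply i).comp continuous_subtype_val
    have h2 : Continuous fun t : stdSimplex ℝ (Fin (r + 1)) => thresh t.1 :=
      continuous_thresh.comp continuous_subtype_val
    have h3 : {t : stdSimplex ℝ (Fin (r + 1)) | MainPart g₀ g.1 t.1} =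
        ⋃ ι : {ι : Fin (p + 1) → Fin (r + 1) // StrictMono ι ∧ ∀ j, g.1 (ι j) = g₀ j},
          (⋂ j, {t | 0 < t.1 (ι.1 j)}) ∩
            ⋂ i : {i // i ∉ Set.range ι.1}, {t | t.1 i.1 < thresh t.1} := by
      ext t
      simp only [Set.mem_ofPred_eq, Set.mem_iUnion, Set.mem_inter_iff, Set.mem_iInter]
      constructor
      · rintro ⟨ι, a, b, c, d⟩
        exact ⟨⟨ι, a, b⟩, c, fun i => d i.1 i.2⟩
      · rintro ⟨ι, c, d⟩
        exact ⟨ι.1, ι.2.1, ι.2.2, c, fun i hi => d ⟨i, hi⟩⟩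
    rw [h3]
    refine isOpen_iUnion fun ι => IsOpen.inter ?_ ?_
    · exact isOpen_iInter_of_finite fun j => isOpen_lt continuous_const (h1 _)
    · exact isOpen_iInter_of_finite fun i => isOpen_lt (h1 _) h2
  exact h.preimage continuous_snd

/-- A point whose coordinates vanish outside a subtuple is a point over that subtuple. -/
theorem mkY_eq_of_support {p r : ℕ} (g₀ : TupW π W p) (g : TupW π W r) (f : relSections g.1)
    (t : stdSimplex ℝ (Fin (r + 1))) {ι : Fin (p + 1) → Fin (r + 1)} (hι : StrictMono ι)
    (hg : ∀ j, g.1 (ι j) = g₀.1 j) (ht : ∀ i, i ∉ Set.range ι → t.1 i = 0)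
    (t₀ : stdSimplex ℝ (Fin (p + 1))) (ht₀ : ∀ j, t₀.1 j = t.1 (ι j))
    (hf : f.1 ∈ relSections g₀.1) :
    mkY g f t = mkY g₀ ⟨f.1, hf⟩ t₀ := by
  induction r with
  | zero =>
    have hp : p = 0 := by
      have := Fintype.card_le_of_injective ι hι.injective
      simpa using this
    subst hp
    have h0 : ∀ i : Fin (0 + 1), ι i = i := fun i => Subsingleton.elim (α := Fin 1) _ _
    simp only [h0] at hg ht₀
    obtain rfl : g = g₀ := Subtype.ext (funext hg)
    obtain rfl : t₀ = t := Subtype.ext (funext ht₀)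
    rfl
  | succ r ih =>
    by_cases hs : Function.Surjective ι
    · have hp : p = r + 1 := by
        have := Fintype.card_of_bijective ⟨hι.injective, hs⟩
        simpa using this
      subst hp
      have h0 : ι = id := hι.range_inj strictMono_id |>.1 (by rw [hs.range_eq, Set.range_id])
      simp only [h0, id] at hg ht₀
      obtain rfl : g = g₀ := Subtype.ext (funext hg)
      obtain rfl : t₀ = t := Subtype.ext (funext ht₀)
      rfl
    · simp only [Function.Surjective, not_forall] at hs
      obtain ⟨i, hi⟩ := hs
      obtain ⟨ι', hι', e⟩ := exists_factor_succAbove hι (i := i) hi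
      obtain ⟨t', rfl, ht'⟩ := exists_simplexFace i t (ht i hi)
      rw [mkY_simplexFace]
      refine ih (g.face i) ⟨f.1, _⟩ t' hι' (fun j => ?_) (fun k hk => ?_) (fun j => ?_) hf
      · rw [← hg, e]
        rfl
      · rw [ht']
        refine ht _ ?_
        rintro ⟨j, hj⟩
        rw [e] at hj
        exact hk ⟨j, Fin.succAbove_right_injective hj⟩
      · rw [ht₀, ht', e]

/-- Near any point, the squished point has a fixed tuple and continuous coordinates. -/
theorem exists_local_structure (hW : ∀ g ∈ W, g.Δ.Nonempty) (y₀ : YRealization π W) :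
    ∃ U : Set (YRealization π W), IsOpen U ∧ y₀ ∈ U ∧ ∃ (p : ℕ) (g₀ : TupW π W p)
      (θ : YRealization π W → stdSimplex ℝ (Fin (p + 1))), ContinuousOn θ U ∧
        ∀ y ∈ U, ∃ hy : forgetY π W y ∈ relSections g₀.1,
          squishY 1 y = mkY g₀ ⟨forgetY π W y, hy⟩ (θ y) := by
  obtain ⟨p, g₀, f₀, t₀, ht₀, rfl⟩ := exists_mkY_pos y₀
  let N : YRealization π W → Fin (p + 1) → ℝ := fun y j =>
    max (coordY (g₀.1 j) y - threshY y) 0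
  have hN : Continuous N := continuous_pi fun j =>
    ((continuous_coordY _).sub continuous_threshY).max continuous_const
  have key : ∀ y : YRealization π W, MainPartY g₀.1 y → 0 < ∑ j, N y j ∧
      ∃ hy : forgetY π W y ∈ relSections g₀.1,
          squishY 1 y = mkY g₀ ⟨forgetY π W y, hy⟩ (toSimplex (N y)) := by
    intro y hy
    obtain ⟨r, g, f, t, rfl⟩ := exists_mkY y
    obtain ⟨ι, hι, hg, hpos, hlt⟩ := (mainPartY_mkY _ _ _ _).1 hy
    have hNι : ∀ j, N (mkY g f t) j = cut ((1 : I) : ℝ) t.1 (ι j) := fun j => by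
      simp only [N, threshY_mkY, cut, ← hg, coordY_mkY_self hW, Set.Icc.coe_one, one_mul]
    have hoff : ∀ i, i ∉ Set.range ι → cut ((1 : I) : ℝ) t.1 i = 0 := fun i hi => by
      simp only [cut, Set.Icc.coe_one, one_mul]
      exact max_eq_right (sub_nonpos.2 (hlt i hi).le)
    have hsum : ∑ j, N (mkY g f t) j = ∑ i, cut ((1 : I) : ℝ) t.1 i := by
      simp only [hNι]
      exact Fintype.sum_of_injective ι hι.injective _ _ hoff fun _ => rfl
    have hsum' : 0 < ∑ j, N (mkY g f t) j := by
      rw [hsum]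
      exact cut_sum_pos 1 t
    have hf : f.1 ∈ relSections g₀.1 := fun j => by
      rw [← hg]
      exact f.2 _
    refine ⟨hsum', hf, ?_⟩
    rw [squishY_mkY]
    refine mkY_eq_of_support g₀ g f _ hι hg (fun i hi => ?_) _ (fun j => ?_) hf
    · rw [squish_apply, hoff i hi, zero_div]
    · rw [squish_apply, toSimplex_apply (v := N (mkY g f t)) (fun j => le_max_right _ _) hsum',
        hsum, hNι]
  refine ⟨{y | MainPartY g₀.1 y}, isOpen_mainPartY _, ?_, p, g₀, fun y => toSimplex (N y), ?_,
    fun y hy => (key y hy).2⟩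
  · exact ⟨id, strictMono_id, fun _ => rfl, ht₀, fun i hi => absurd ⟨i, rfl⟩ hi⟩
  · exact continuousOn_toSimplex.comp hN.continuousOn fun y hy =>
      ⟨fun j => le_max_right _ _, (key y hy).1⟩

end Squish

/-! ### Lifting squares up to homotopy -/

section Assembly

theorem contractibleSpace_cube (n : ℕ) : ContractibleSpace (Fin n → I) := by
  rw [contractible_iff_id_nullhomotopic]
  refine ⟨fun _ => 0, ⟨⟨⟨fun z i => σ z.1 * z.2 i, by fun_prop⟩, fun x => ?_, fun x => ?_⟩⟩⟩
  · funext i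
    simp
  · funext i
    simp

theorem joined_square {X : Type u} {Y : Type v} [TopologicalSpace X] [TopologicalSpace Y] {n : ℕ}
    {f : C(X, Y)} {p q : SquareSpace n f} (A : I × Cube.boundary (Fin n) → X)
    (B : I × (Fin n → I) → Y) (hA : Continuous A) (hB : Continuous B)
    (h : ∀ s x, f (A (s, x)) = B (s, x.1)) (hp : ∀ x, A (0, x) = p.1.1 x)
    (hp' : ∀ x, B (0, x) = p.1.2 x) (hq : ∀ x, A (1, x) = q.1.1 x)
    (hq' : ∀ x, B (1, x) = q.1.2 x) : Joined p q := by
  refine ⟨⟨⟨fun s => ⟨(ContinuousMap.curry ⟨A, hA⟩ s, ContinuousMap.curry ⟨B, hB⟩ s),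
    fun x => h s x⟩, ?_⟩, ?_, ?_⟩⟩
  · refine Continuous.subtype_mk (Continuous.prodMk ?_ ?_) _
    · exact (ContinuousMap.curry ⟨A, hA⟩).continuous
    · exact (ContinuousMap.curry ⟨B, hB⟩).continuous
  · exact Subtype.ext (Prod.ext (ContinuousMap.ext hp) (ContinuousMap.ext hp'))
  · exact Subtype.ext (Prod.ext (ContinuousMap.ext hq) (ContinuousMap.ext hq'))

variable {E M F : Type u} [TopologicalSpace E] [TopologicalSpace M] [TopologicalSpace F]

/-- The homotopy lifting criterion for the forgetful map. The square `(φ, Φ)` is deformed in three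
steps: `φ` is squished so as to be described locally by finitely many tuples; the sections are
deformed, away from the sets of these tuples, so as to fix a further germ `w`; finally `φ` is coned
off to the vertex `w`, over which the square has an obvious lift. -/
theorem hasHomotopyLifts_forgetY [T2Space M] [LocallyCompactSpace M] [PathConnectedSpace F] {d : ℕ}
    {π : E → M} (hπ : IsFiberBundle F π) {W : Set (GermData π)} (hW : IsSuffSep d π W) :
    HasHomotopyLifts (⟨forgetY π W, continuous_forgetY⟩ : C(YRealization π W, SectionSpace π)) := by
  classical
  have hne : ∀ g ∈ W, g.Δ.Nonempty := fun g hg => by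
    have := hW.contractible g hg
    exact Set.nonempty_coe_sort.1 inferInstance
  rintro n ⟨⟨φ, Φ⟩, hφΦ⟩
  replace hφΦ : ∀ x : Cube.boundary (Fin n), forgetY π W (φ x) = Φ x.1 := hφΦ
  have := contractibleSpace_cube n
  -- A finite cover of the boundary by sets on which the squished map is over one tuple.
  choose U hU hxU p g θ hθ hsq using fun x : Cube.boundary (Fin n) =>
    exists_local_structure hne (φ x)
  have hU' : ∀ i, IsOpen (φ ⁻¹' U i) := fun i => (hU i).preimage φ.continuous
  obtain ⟨S, -, hS⟩ := isCompact_univ.elim_nhds_subcover (fun i => φ ⁻¹' U i)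
    fun i _ => (hU' i).mem_nhds (hxU i)
  have hc : ∀ x : Cube.boundary (Fin n), ∃ i : S, φ x ∈ U i.1 := fun x => by
    have := hS (Set.mem_univ x)
    simp only [Set.mem_iUnion] at this
    obtain ⟨i, hi, hx⟩ := this
    exact ⟨⟨i, hi⟩, hx⟩
  choose c hc using hc
  -- A germ `w` away from all these tuples.
  let J : Type := Σ i : S, Fin (p i.1 + 1)
  let e : J ≃ Fin (Nat.card J) := Finite.equivFin J
  obtain ⟨w, hw, D', -, hwD', hD'⟩ := hW.sep (Nat.card J)
    (fun k => (g (e.symm k).1.1).1 (e.symm k).2) fun k => (g _).2.1 _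
  have hD'g : ∀ (i : S) (j : Fin (p i.1 + 1)), Disjoint D' ((g i.1).1 j).Δ := fun i j => by
    have := hD' (e ⟨i, j⟩)
    rwa [e.symm_apply_apply] at this
  have hwg : ∀ (i : S) (j : Fin (p i.1 + 1)), Disjoint w.Δ ((g i.1).1 j).Δ := fun i j =>
    (hD'g i j).mono_left (hwD'.trans interior_subset)
  obtain ⟨D, ⟨hD⟩, hwD, hcof⟩ := hW.cofib w hw
  obtain ⟨H, H0, Hoff, H1⟩ := exists_deformation hπ w (hW.compact w hw) (hW.contractible w hw) hD
    hwD hcof isOpen_interior hwD' Φ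
  have hHc : Continuous fun z : I × Cube.boundary (Fin n) => H (z.1, z.2.1) :=
    H.continuous.comp (by fun_prop)
  have hfix : ∀ (i : S) (s : I) (x : Cube.boundary (Fin n)), φ x ∈ U i.1 →
      H (s, x.1) ∈ relSections (g i.1).1 := by
    intro i s x hx j y hy
    rw [Hoff s x.1 y fun h => (Set.disjoint_left.1 (hD'g i j)) (interior_subset h) hy, ← hφΦ]
    exact (hsq i.1 _ hx).1 j y hy
  -- The homotopy carrying the squished map along the deformation of sections.
  let T : I × Cube.boundary (Fin n) → YRealization π W := fun z =>
    mkY (g (c z.2).1) ⟨H (z.1, z.2.1), hfix _ _ _ (hc z.2)⟩ (θ (c z.2).1 (φ z.2))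
  have hT : ∀ (i : S) (s : I) (x : Cube.boundary (Fin n)) (hx : φ x ∈ U i.1),
      T (s, x) = mkY (g i.1) ⟨H (s, x.1), hfix i s x hx⟩ (θ i.1 (φ x)) := by
    intro i s x hx
    exact mkY_congr_section
      ((hsq _ _ (hc x)).choose_spec.symm.trans (hsq i.1 _ hx).choose_spec) _ _
  have hTc : Continuous T := by
    refine continuous_of_local_mkY T _ hHc fun z => ?_
    refine ⟨Prod.snd ⁻¹' (φ ⁻¹' U (c z.2).1), (hU' _).preimage continuous_snd, hc z.2,
      p (c z.2).1, g (c z.2).1, fun x => θ (c z.2).1 (φ x.2), ?_, ?_⟩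
    · exact (hθ _).comp (φ.continuous.comp continuous_snd).continuousOn fun x hx => hx
    · exact fun x hx => ⟨hfix _ _ _ hx, hT _ _ _ hx⟩
  -- The cone from the deformed map to the vertex `w`.
  let C : I × Cube.boundary (Fin n) → YRealization π W := fun z =>
    mkY (coneTup w hw (g (c z.2).1) (hwg _))
      ⟨H (1, z.2.1), fixes_coneTup (H1 _) (hfix _ _ _ (hc z.2))⟩
      (conePt z.1 (θ (c z.2).1 (φ z.2)))
  have hC : ∀ (i : S) (s : I) (x : Cube.boundary (Fin n)) (hx : φ x ∈ U i.1),
      C (s, x) = mkY (coneTup w hw (g i.1) (hwg i))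
        ⟨H (1, x.1), fixes_coneTup (H1 _) (hfix i 1 x hx)⟩ (conePt s (θ i.1 (φ x))) := by
    intro i s x hx
    exact cone_congr s (H1 _) (hfix _ 1 x (hc x)) (hfix i 1 x hx) (hT i 1 x hx)
  have hCc : Continuous C := by
    refine continuous_of_local_mkY C (fun z => H (1, z.2.1))
      (H.continuous.comp (by fun_prop)) fun z => ?_
    refine ⟨Prod.snd ⁻¹' (φ ⁻¹' U (c z.2).1), (hU' _).preimage continuous_snd, hc z.2,
      p (c z.2).1 + 1, coneTup w hw (g (c z.2).1) (hwg _),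
      fun x => conePt x.1 (θ (c z.2).1 (φ x.2)), ?_, ?_⟩
    · refine continuous_conePt.comp_continuousOn (continuousOn_fst.prodMk ?_)
      exact (hθ _).comp (φ.continuous.comp continuous_snd).continuousOn fun x hx => hx
    · exact fun x hx => ⟨_, hC _ _ _ hx⟩
  -- The lift of the final square.
  let l : C(Fin n → I, YRealization π W) := ⟨fun k => vertexY w hw (H (1, k)) (H1 k), by
    refine (continuous_mkY (singleTup w hw)).comp (Continuous.prodMk ?_ continuous_const)
    exact Continuous.subtype_mk (H.continuous.comp (by fun_prop)) _⟩
  let H₁ : C(Fin n → I, SectionSpace π) := ⟨fun k => H (1, k), by fun_prop⟩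
  let φ₁ : C(Cube.boundary (Fin n), YRealization π W) :=
    ⟨fun x => squishY 1 (φ x), continuous_squishY.comp
      (f := fun x => ((1 : I), φ x)) (by fun_prop)⟩
  let φ₂ : C(Cube.boundary (Fin n), YRealization π W) :=
    ⟨fun x => T (1, x), hTc.comp (by fun_prop)⟩
  refine ⟨⟨(l.comp ⟨Subtype.val, continuous_subtype_val⟩, H₁), fun x => rfl⟩,
    Joined.trans (y := ⟨(φ₁, Φ), fun x => (forgetY_squishY 1 (φ x)).trans (hφΦ x)⟩) ?_
      (Joined.trans (y := ⟨(φ₂, H₁), fun x => rfl⟩) ?_ ?_), ⟨l, fun x => rfl, fun x => rfl⟩⟩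
  · exact joined_square (fun z => squishY z.1 (φ z.2)) (fun z => Φ z.2)
      (continuous_squishY.comp
        (f := fun z : I × Cube.boundary (Fin n) => (z.1, φ z.2)) (by fun_prop)) (by fun_prop)
      (fun s x => (forgetY_squishY s (φ x)).trans (hφΦ x)) (fun x => squishY_zero _)
      (fun x => rfl) (fun x => rfl) (fun x => rfl)
  · refine joined_square T H hTc H.continuous (fun s x => rfl) (fun x => ?_) H0 (fun x => rfl)
      (fun x => rfl)
    obtain ⟨hx, e⟩ := hsq _ _ (hc x)
    refine Eq.trans ?_ e.symm
    exact eq_of_normalForm_eq ((H0 x.1).trans (hφΦ x).symm) rfl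
  · refine joined_square C (fun z => H₁ z.2) hCc (by fun_prop) (fun s x => rfl) (fun x => ?_)
      (fun x => rfl) (fun x => ?_) (fun x => rfl)
    · exact cone_zero (H1 _) (hfix _ 1 x (hc x)) _
    · exact cone_one (H1 _) (hfix _ 1 x (hc x)) _

end Assembly

/-- Let `M` be a `d`-dimensional manifold without boundary, `π : E → M` a fiber bundle with
path-connected fiber, and `W` a sufficiently separated collection for `π`.  Then the natural map
`||Y_•|| → Γ(E)` from the fat geometric realization of the associated semi-simplicial space,
given by forgetting the fixed subsets, is a weak homotopy equivalence. -/
theorem forgetY_isWeakHomotopyEquiv {d : ℕ} {E M F : Type u}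
    [TopologicalSpace E] [TopologicalSpace M] [TopologicalSpace F]
    [ChartedSpace (EuclideanSpace ℝ (Fin d)) M] [T2Space M] [PathConnectedSpace F]
    (π : E → M) (hπ : IsFiberBundle F π)
    (W : Set (GermData π)) (hW : IsSuffSep d π W) :
    IsWeakHomotopyEquiv (forgetY π W) := by
  have : LocallyCompactSpace M := ChartedSpace.locallyCompactSpace (EuclideanSpace ℝ (Fin d)) M
  exact (hasHomotopyLifts_forgetY hπ hW).isWeakHomotopyEquiv
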